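/- arXiv:1506.06253 — 7 statements merged into one kernel-verified Lean document; each statement's English description precedes it below -/
import Mathlib

section
/- Let P be a point not lying on any extended side of ABC or of its anticomplementary triangle K⁻¹(ABC), and not on the Steiner circumellipse. Then the point O = T_{P′}⁻¹(K(Q)) satisfies OD₀ ∥ QD, OE₀ ∥ QE, OF₀ ∥ QF (so O is the generalized circumcenter of P), and the point H = K⁻¹(O) = K⁻¹(T_{P′}⁻¹(K(Q))) satisfies AH ∥ QD, BH ∥ QE, CH ∥ QF (so H is the generalized orthocenter of P). -/
noncomputable section

/-- The real affine plane. -/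
abbrev Pt : Type := ℝ × ℝ

/-- `u` and `v` are parallel vectors (the zero vector is parallel to everything). -/
def Par (u v : Pt) : Prop := ∃ t : ℝ, u = t • v ∨ v = t • u

/-- The centroid of the triangle `ABC`. -/
def cent (A B C : Pt) : Pt := (3⁻¹ : ℝ) • (A + B + C)

/-- The homothety with center `Z` and ratio `r`. -/
def homoth (Z : Pt) (r : ℝ) (X : Pt) : Pt := Z + r • (X - Z)

/-- The value at `p` of the quadratic polynomial with coefficient vector `c`. -/
def qval (c : Fin 6 → ℝ) (p : Pt) : ℝ :=
  c 0 * p.1 ^ 2 + c 1 * p.1 * p.2 + c 2 * p.2 ^ 2 + c 3 * p.1 + c 4 * p.2 + c 5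

/-- `S` is a conic: the zero locus of a real polynomial of total degree 2. -/
def IsConic (S : Set Pt) : Prop :=
  ∃ c : Fin 6 → ℝ, ¬(c 0 = 0 ∧ c 1 = 0 ∧ c 2 = 0) ∧ S = {p | qval c p = 0}

/-- `Z` is a center of symmetry of `S`. -/
def IsCenterOf (Z : Pt) (S : Set Pt) : Prop :=
  ∀ p ∈ S, (2 : ℝ) • Z - p ∈ S

/-- The gradient at `p` of the quadratic polynomial with coefficients `c`. -/
def qgrad (c : Fin 6 → ℝ) (p : Pt) : Pt :=
  (2 * c 0 * p.1 + c 1 * p.2 + c 3, c 1 * p.1 + 2 * c 2 * p.2 + c 4)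

/-- The line through `X` and `Y`. -/
def lineThru (X Y : Pt) : Set Pt := {p | ∃ t : ℝ, p = X + t • (Y - X)}

/-- `L` is the tangent line at the nonsingular point `p` of the conic with coefficients `c`. -/
def IsTangentLineAt (c : Fin 6 → ℝ) (L : Set Pt) (p : Pt) : Prop :=
  qval c p = 0 ∧ qgrad c p ≠ 0 ∧
  L = {q | (qgrad c p).1 * (q.1 - p.1) + (qgrad c p).2 * (q.2 - p.2) = 0}

/-- The points `A`, `B`, `C` satisfy no nontrivial affine relation. -/
def NoRelation (A B C : Pt) : Prop :=
  ∀ a b c : ℝ, a + b + c = 0 → a • A + b • B + c • C = 0 → a = 0 ∧ b = 0 ∧ c = 0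

theorem AffineIndependent.noRelation {A B C : Pt} (h : AffineIndependent ℝ ![A, B, C]) :
    NoRelation A B C := by
  intro a b c hs hv
  rw [affineIndependent_iff] at h
  have key := h Finset.univ ![a, b, c] (by simpa [Fin.sum_univ_three] using hs)
    (by simpa [Fin.sum_univ_three] using hv)
  exact ⟨key 0 (by simp), key 1 (by simp), key 2 (by simp)⟩

theorem NoRelation.rotate {A B C : Pt} (h : NoRelation A B C) : NoRelation B C A := by
  intro a b c hs hv
  obtain ⟨h₁, h₂, h₃⟩ := h c a b (by linarith) (by rw [← hv]; module)
  exact ⟨h₂, h₃, h₁⟩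

theorem NoRelation.ne {A B C : Pt} (h : NoRelation A B C) : B ≠ C := by
  rintro rfl
  have := h 0 1 (-1) (by norm_num) (by module)
  norm_num at this

theorem Collinear.exists_eq_add_smul {X Y Z : Pt} (h : Collinear ℝ {X, Y, Z}) (hne : X ≠ Y) :
    ∃ t : ℝ, Z = X + t • (Y - X) := by
  have hm : Z ∈ line[ℝ, X, Y] :=
    h.mem_affineSpan_of_mem_of_ne (by simp) (by simp) (by simp) hne
  obtain ⟨t, rfl⟩ := mem_affineSpan_pair_iff_exists_lineMap_eq.1 hm
  exact ⟨t, by rw [AffineMap.lineMap_apply_module']; module⟩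

/-- The trace on `BC` of the cevian through `A` of a point with barycentric coordinates
`(p : q : r)`. -/
theorem NoRelation.trace_eq {A B C P D : Pt} (h : NoRelation A B C) {p q r : ℝ}
    (hs : p + q + r = 1) (hqr : q + r ≠ 0) (hP : P = p • A + q • B + r • C)
    (hAP : Collinear ℝ {A, P, D}) (hBC : Collinear ℝ {B, C, D}) :
    D = (q / (q + r)) • B + (r / (q + r)) • C := by
  have hne : A ≠ P := by
    intro hA
    obtain ⟨-, hq, hr⟩ := h (p - 1) q r (by linarith) (by
      have : p • A + q • B + r • C - A = 0 := by rw [← hP, ← hA, sub_self]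
      rw [← this]; module)
    exact hqr (by rw [hq, hr, add_zero])
  obtain ⟨k, hk⟩ := hAP.exists_eq_add_smul hne
  obtain ⟨t, ht⟩ := hBC.exists_eq_add_smul h.ne
  obtain ⟨-, h₂, h₃⟩ := h (1 - k + k * p) (k * q - (1 - t)) (k * r - t)
    (by linear_combination k * hs) (by
      have : A + k • (p • A + q • B + r • C - A) - (B + t • (C - B)) = 0 := by
        rw [← hP, ← hk, ← ht, sub_self]
      rw [← this]; module)
  have hkq : k * (q + r) = 1 := by linarith
  have hq : q / (q + r) = 1 - t := by
    rw [div_eq_iff hqr]; linear_combination (q + r) * h₂ - q * hkq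
  have hr : r / (q + r) = t := by
    rw [div_eq_iff hqr]; linear_combination (q + r) * h₃ - r * hkq
  rw [hq, hr, ht]; module

/-- Barycentric coordinate at `A` of the generalized circumcenter of `(x : y : z)`. -/
def circumCoord (x y z : ℝ) : ℝ :=
  (y + z) ^ 2 * (x * y + y * z + z * x - x ^ 2) / (8 * (y * z) * (x * y + y * z + z * x))

theorem circumCoord_sum {x y z : ℝ} (hx : x ≠ 0) (hy : y ≠ 0) (hz : z ≠ 0)
    (hst : x * y + y * z + z * x ≠ 0) :
    circumCoord x y z + circumCoord y z x + circumCoord z x y = 1 := by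
  unfold circumCoord
  rw [show y * z + z * x + x * y = x * y + y * z + z * x by ring,
    show z * x + x * y + y * z = x * y + y * z + z * x by ring]
  obtain ⟨s, hs⟩ : ∃ s, s = x * y + y * z + z * x := ⟨_, rfl⟩
  rw [← hs] at hst ⊢
  field_simp
  rw [hs]
  ring

/-- The isotomcomplement of the point with barycentric coordinates `(x : y : z)`. -/
def isotomcompl (A B C : Pt) (x y z : ℝ) : Pt :=
  (2 * (x * y + y * z + z * x))⁻¹ • ((x * (y + z)) • A + (y * (z + x)) • B + (z * (x + y)) • C)

theorem isotomcompl_rotate (A B C : Pt) (x y z : ℝ) :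
    isotomcompl A B C x y z = isotomcompl B C A y z x := by
  unfold isotomcompl
  rw [show x * y + y * z + z * x = y * z + z * x + x * y by ring]
  module

/-- The line from a vertex to the generalized orthocenter is parallel to the line joining the
isotomcomplement to the corresponding trace. -/
theorem par_orthocenter (A B C : Pt) {x y z : ℝ}
    (hx : x ≠ 0) (hy : y ≠ 0) (hz : z ≠ 0) (hyz : y + z ≠ 0)
    (hst : x * y + y * z + z * x ≠ 0) :
    ∃ t : ℝ, homoth (cent A B C) (-2)
        (circumCoord x y z • A + circumCoord y z x • B + circumCoord z x y • C) - A =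
      t • ((y / (y + z)) • B + (z / (y + z)) • C - isotomcompl A B C x y z) := by
  refine ⟨2 * circumCoord x y z * (2 * (x * y + y * z + z * x)) / (x * (y + z)), ?_⟩
  unfold circumCoord isotomcompl homoth cent
  rw [show y * z + z * x + x * y = x * y + y * z + z * x by ring,
    show z * x + x * y + y * z = x * y + y * z + z * x by ring]
  obtain ⟨s, hs⟩ : ∃ s, s = x * y + y * z + z * x := ⟨_, rfl⟩
  rw [← hs] at hst ⊢
  match_scalars
  all_goals (field_simp; rw [hs]; ring)

theorem AffineMap.map_barycentric (T : Pt →ᵃ[ℝ] Pt) (A B C : Pt) {a b c : ℝ}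
    (hs : a + b + c = 1) : T (a • A + b • B + c • C) = a • T A + b • T B + c • T C := by
  obtain rfl : a = 1 - b - c := by linarith
  have e : (1 - b - c) • A + b • B + c • C = (b • (B -ᵥ A) + c • (C -ᵥ A)) +ᵥ A := by
    simp only [vsub_eq_sub, vadd_eq_add]; module
  rw [e, T.map_vadd, map_add, map_smul, map_smul, T.linearMap_vsub, T.linearMap_vsub]
  simp only [vsub_eq_sub, vadd_eq_add]
  module

/-- The trace on `BC` of the cevian through `A` of the isotomic conjugate of `(x : y : z)`. -/
theorem NoRelation.isotomic_trace_eq {A B C P' D₃ : Pt} (h : NoRelation A B C) {x y z s : ℝ}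
    (hs : s = x * y + y * z + z * x) (hs0 : s ≠ 0) (hx : x ≠ 0) (hyz : y + z ≠ 0)
    (hP' : P' = (y * z / s) • A + (x * z / s) • B + (x * y / s) • C)
    (hAP : Collinear ℝ {A, P', D₃}) (hBC : Collinear ℝ {B, C, D₃}) :
    D₃ = (z / (y + z)) • B + (y / (y + z)) • C := by
  have e : x * z / s + x * y / s = x * (y + z) / s := by ring
  have hne : x * z / s + x * y / s ≠ 0 := by
    rw [e]; exact div_ne_zero (mul_ne_zero hx hyz) hs0
  rw [h.trace_eq (by field_simp; rw [hs]; ring) hne hP' hAP hBC, e]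
  congr 2 <;> field_simp

/-- The affine map taking a triangle to the cevian triangle of the isotomic conjugate takes the
generalized circumcenter to the complement of the isotomcomplement. -/
theorem circumcenter_image (A B C : Pt) {x y z : ℝ}
    (hx : x ≠ 0) (hy : y ≠ 0) (hz : z ≠ 0)
    (hst : x * y + y * z + z * x ≠ 0) :
    circumCoord x y z • ((z / (y + z)) • B + (y / (y + z)) • C) +
        circumCoord y z x • ((x / (z + x)) • C + (z / (z + x)) • A) +
        circumCoord z x y • ((y / (x + y)) • A + (x / (x + y)) • B) =
      homoth (cent A B C) (-(1 / 2)) (isotomcompl A B C x y z) := by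
  unfold circumCoord isotomcompl homoth cent
  rw [show y * z + z * x + x * y = x * y + y * z + z * x by ring,
    show z * x + x * y + y * z = x * y + y * z + z * x by ring]
  obtain ⟨s, hs⟩ : ∃ s, s = x * y + y * z + z * x := ⟨_, rfl⟩
  rw [← hs] at hst ⊢
  match_scalars
  all_goals (field_simp; rw [hs]; ring)

theorem isotomcompl_eq (A B C : Pt) {x y z : ℝ} (hst : x * y + y * z + z * x ≠ 0) :
    homoth (cent A B C) (-(1 / 2)) ((y * z / (x * y + y * z + z * x)) • A
        + (x * z / (x * y + y * z + z * x)) • B + (x * y / (x * y + y * z + z * x)) • C) =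
      isotomcompl A B C x y z := by
  unfold isotomcompl homoth cent
  obtain ⟨s, hs⟩ : ∃ s, s = x * y + y * z + z * x := ⟨_, rfl⟩
  rw [← hs] at hst ⊢
  match_scalars
  all_goals (field_simp; rw [hs]; ring)

theorem cent_rotate (A B C : Pt) : cent A B C = cent B C A := by
  unfold cent; module

theorem midpoint_sub_eq (A B C O : Pt) :
    midpoint ℝ B C - O = (1 / 2 : ℝ) • (homoth (cent A B C) (-2) O - A) := by
  rw [midpoint_eq_smul_add, invOf_eq_inv]
  unfold homoth cent
  module

/-- The two parallels attached to the vertex `A`. -/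
theorem par_pair {A B C Q D O : Pt} {x y z : ℝ} (h : NoRelation A B C) (hsum : x + y + z = 1)
    (hx : x ≠ 0) (hy : y ≠ 0) (hz : z ≠ 0) (hyz : y + z ≠ 0)
    (hst : x * y + y * z + z * x ≠ 0) (hQ : Q = isotomcompl A B C x y z)
    (hAP : Collinear ℝ {A, x • A + y • B + z • C, D}) (hBC : Collinear ℝ {B, C, D})
    (hO : O = circumCoord x y z • A + circumCoord y z x • B + circumCoord z x y • C) :
    Par (midpoint ℝ B C - O) (D - Q) ∧ Par (homoth (cent A B C) (-2) O - A) (D - Q) := by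
  obtain ⟨t, ht⟩ := par_orthocenter A B C hx hy hz hyz hst
  rw [← hO, ← hQ, ← h.trace_eq hsum hyz rfl hAP hBC] at ht
  exact ⟨⟨1 / 2 * t, Or.inl (by rw [midpoint_sub_eq A, ht, smul_smul])⟩, t, Or.inl ht⟩

theorem generalized_circumcenter_orthocenter_formulas
    (A B C P P' Q Q' D E F D₃ E₃ F₃ : Pt) (x y z : ℝ)
    (hABC : AffineIndependent ℝ ![A, B, C])
    (hsum : x + y + z = 1)
    (hPco : P = x • A + y • B + z • C)
    (hx0 : x ≠ 0) (hy0 : y ≠ 0) (hz0 : z ≠ 0)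
    (hx1 : x ≠ 1) (hy1 : y ≠ 1) (hz1 : z ≠ 1)
    (hst : x * y + y * z + z * x ≠ 0)
    (hP' : P' = (y * z / (x * y + y * z + z * x)) • A
        + (x * z / (x * y + y * z + z * x)) • B
        + (x * y / (x * y + y * z + z * x)) • C)
    (hQ : Q = homoth (cent A B C) (-(1 / 2)) P')
    (hQ' : Q' = homoth (cent A B C) (-(1 / 2)) P)
    (hD : Collinear ℝ {A, P, D} ∧ Collinear ℝ {B, C, D})
    (hE : Collinear ℝ {B, P, E} ∧ Collinear ℝ {A, C, E})
    (hF : Collinear ℝ {C, P, F} ∧ Collinear ℝ {A, B, F})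
    (hD₃ : Collinear ℝ {A, P', D₃} ∧ Collinear ℝ {B, C, D₃})
    (hE₃ : Collinear ℝ {B, P', E₃} ∧ Collinear ℝ {A, C, E₃})
    (hF₃ : Collinear ℝ {C, P', F₃} ∧ Collinear ℝ {A, B, F₃})
    (TP' : Pt ≃ᵃ[ℝ] Pt) (hTP' : TP' A = D₃ ∧ TP' B = E₃ ∧ TP' C = F₃)
    (O H : Pt)
    (hO : O = TP'.symm (homoth (cent A B C) (-(1 / 2)) Q))
    (hH : H = homoth (cent A B C) (-2) O) :
    Par (midpoint ℝ B C - O) (D - Q) ∧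
    Par (midpoint ℝ C A - O) (E - Q) ∧
    Par (midpoint ℝ A B - O) (F - Q) ∧
    Par (H - A) (D - Q) ∧ Par (H - B) (E - Q) ∧ Par (H - C) (F - Q) := by
  have h := hABC.noRelation
  have hyz : y + z ≠ 0 := fun e => hx1 (by linarith)
  have hzx : z + x ≠ 0 := fun e => hy1 (by linarith)
  have hxy : x + y ≠ 0 := fun e => hz1 (by linarith)
  rw [Set.insert_comm A C] at hE hE₃
  have hst₂ : y * z + z * x + x * y ≠ 0 := by convert hst using 1; ring
  have hst₃ : z * x + x * y + y * z ≠ 0 := by convert hst using 1; ring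
  have hD₃eq := h.isotomic_trace_eq rfl hst hx0 hyz hP' hD₃.1 hD₃.2
  have hE₃eq := h.rotate.isotomic_trace_eq (by ring) hst hy0 hzx
    (by rw [hP']; module) hE₃.1 hE₃.2
  have hF₃eq := h.rotate.rotate.isotomic_trace_eq (by ring) hst hz0 hxy
    (by rw [hP']; module) hF₃.1 hF₃.2
  rw [hP', isotomcompl_eq A B C hst] at hQ
  have hOeq : O = circumCoord x y z • A + circumCoord y z x • B + circumCoord z x y • C := by
    have hT := TP'.toAffineMap.map_barycentric A B C (circumCoord_sum hx0 hy0 hz0 hst)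
    simp only [AffineEquiv.coe_toAffineMap] at hT
    rw [hO, AffineEquiv.symm_apply_eq, hT, hTP'.1, hTP'.2.1, hTP'.2.2, hD₃eq, hE₃eq,
      hF₃eq, hQ, circumcenter_image A B C hx0 hy0 hz0 hst]
  have hQB := hQ.trans (isotomcompl_rotate A B C x y z)
  have hQC := hQB.trans (isotomcompl_rotate B C A y z x)
  have hPB : P = y • B + z • C + x • A := by rw [hPco]; module
  have hPC : P = z • C + x • A + y • B := by rw [hPco]; module
  obtain ⟨hD₀, hHA⟩ := par_pair h hsum hx0 hy0 hz0 hyz hst hQ (hPco ▸ hD.1) hD.2 hOeq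
  obtain ⟨hE₀, hHB⟩ := par_pair (O := O) h.rotate (by linarith) hy0 hz0 hx0 hzx hst₂ hQB
    (hPB ▸ hE.1) hE.2 (by rw [hOeq]; module)
  obtain ⟨hF₀, hHC⟩ := par_pair (O := O) h.rotate.rotate (by linarith) hz0 hx0 hy0 hxy hst₃ hQC
    (hPC ▸ hF.1) hF.2 (by rw [hOeq]; module)
  rw [← cent_rotate, ← hH] at hHB
  rw [← cent_rotate, ← cent_rotate, ← hH] at hHC
  rw [← hH] at hHA
  exact ⟨hD₀, hE₀, hF₀, hHA, hHB, hHC⟩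
end
end

section
/- (a) The nine points D₀, E₀, F₀, D₃, E₃, F₃ and the midpoints of segments AP′, BP′, CP′ lie on a single conic N_{P′} (the nine-point conic of the quadrangle ABCP′), and the center of N_{P′} is K(Q). (b) The image T_{P′}⁻¹(N_{P′}) is a conic passing through A, B, C whose center is O = T_{P′}⁻¹(K(Q)); that is, T_{P′}⁻¹(N_{P′}) is the circumconic C̃_O of ABC with center O. -/
noncomputable section

/-- The coefficients of the conic which, in the barycentric coordinates `(1 - s - t : s : t)`, has
equation `x u² + y v² + z w² = (y + z) v w + (z + x) w u + (x + y) u v`. -/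
def ninePointCoeff (x y z : ℝ) : Fin 6 → ℝ :=
  ![2 * (x + y), 4 * x, 2 * (x + z), -(3 * x + y), -(3 * x + z), x]

lemma qval_ninePointCoeff (x y z s t : ℝ) :
    qval (ninePointCoeff x y z) (s, t) =
      2 * (x + y) * s ^ 2 + 4 * x * s * t + 2 * (x + z) * t ^ 2 - (3 * x + y) * s
        - (3 * x + z) * t + x := by
  simp [qval, ninePointCoeff]
  ring

/-- The affine frame of a triangle, as an affine automorphism of the plane. -/
lemma exists_affineEquiv_of_affineIndependent {A B C : Pt}
    (h : AffineIndependent ℝ ![A, B, C]) :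
    ∃ e : Pt ≃ᵃ[ℝ] Pt, ∀ s t : ℝ, e (s, t) = A + s • (B - A) + t • (C - A) := by
  have hli : LinearIndependent ℝ ![B - A, C - A] := by
    have h' := (affineIndependent_iff_linearIndependent_vsub ℝ _ (0 : Fin 3)).1 h
    have h'' := h'.comp (fun i : Fin 2 => (⟨i.succ, Fin.succ_ne_zero i⟩ : {j : Fin 3 // j ≠ 0}))
      (fun i j hij => by simpa using hij)
    have heq : ![B - A, C - A] = (fun i : {j : Fin 3 // j ≠ 0} => ![A, B, C] i -ᵥ ![A, B, C] 0) ∘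
        fun i : Fin 2 => ⟨i.succ, Fin.succ_ne_zero i⟩ := by
      ext i <;> fin_cases i <;> simp
    rw [heq]
    exact h''
  let b := basisOfLinearIndependentOfCardEqFinrank hli (by simp)
  let L : Pt ≃ₗ[ℝ] Pt := (LinearEquiv.finTwoArrow ℝ ℝ).symm.trans b.equivFun.symm
  refine ⟨L.toAffineEquiv.trans (AffineEquiv.constVAdd ℝ Pt A), fun s t => ?_⟩
  simp [L, b, Module.Basis.equivFun_symm_apply, add_assoc]

lemma IsConic.image {S : Set Pt} (hS : IsConic S) (e : Pt ≃ᵃ[ℝ] Pt) :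
    IsConic ((fun p => e p) '' S) := by
  obtain ⟨c, hc, rfl⟩ := hS
  let L := e.symm.linear
  obtain ⟨a₁, a₂, ha⟩ : ∃ a₁ a₂, L (1, 0) = (a₁, a₂) := ⟨_, _, rfl⟩
  obtain ⟨b₁, b₂, hb⟩ : ∃ b₁ b₂, L (0, 1) = (b₁, b₂) := ⟨_, _, rfl⟩
  obtain ⟨o₁, o₂, ho⟩ : ∃ o₁ o₂, e.symm 0 = (o₁, o₂) := ⟨_, _, rfl⟩
  have hL (p : Pt) : L p = (p.1 * a₁ + p.2 * b₁, p.1 * a₂ + p.2 * b₂) := by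
    have : p = p.1 • ((1, 0) : Pt) + p.2 • ((0, 1) : Pt) := by ext <;> simp
    conv_lhs => rw [this]
    rw [map_add, map_smul, map_smul, ha, hb]
    ext <;> simp
  have he (p : Pt) :
      e.symm p = (p.1 * a₁ + p.2 * b₁ + o₁, p.1 * a₂ + p.2 * b₂ + o₂) := by
    have := e.symm.map_vadd 0 p
    rw [ho] at this
    change e.symm (p + 0) = L p + (o₁, o₂) at this
    rw [add_zero, hL] at this
    simpa using this
  refine ⟨![c 0 * a₁ ^ 2 + c 1 * a₁ * a₂ + c 2 * a₂ ^ 2,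
    2 * c 0 * a₁ * b₁ + c 1 * (a₁ * b₂ + a₂ * b₁) + 2 * c 2 * a₂ * b₂,
    c 0 * b₁ ^ 2 + c 1 * b₁ * b₂ + c 2 * b₂ ^ 2,
    2 * c 0 * a₁ * o₁ + c 1 * (a₁ * o₂ + a₂ * o₁) + 2 * c 2 * a₂ * o₂ + c 3 * a₁ + c 4 * a₂,
    2 * c 0 * b₁ * o₁ + c 1 * (b₁ * o₂ + b₂ * o₁) + 2 * c 2 * b₂ * o₂ + c 3 * b₁ + c 4 * b₂,
    qval c (o₁, o₂)], ?_, ?_⟩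
  · rintro ⟨h0, h1, h2⟩
    simp only [Matrix.cons_val] at h0 h1 h2
    have hq (v : Pt) : c 0 * v.1 ^ 2 + c 1 * v.1 * v.2 + c 2 * v.2 ^ 2 = 0 := by
      obtain ⟨p, rfl⟩ := L.surjective v
      rw [hL]
      linear_combination p.1 ^ 2 * h0 + p.1 * p.2 * h1 + p.2 ^ 2 * h2
    have h10 := hq (1, 0)
    have h01 := hq (0, 1)
    have h11 := hq (1, 1)
    norm_num at h10 h01 h11
    exact hc ⟨h10, by linarith, h01⟩
  · ext p
    have : p ∈ (fun p => e p) '' {p | qval c p = 0} ↔ qval c (e.symm p) = 0 := by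
      constructor
      · rintro ⟨q, hq, rfl⟩
        simpa using hq
      · exact fun h => ⟨e.symm p, h, by simp⟩
    rw [this, he, Set.mem_ofPred_eq]
    simp only [qval, Matrix.cons_val]
    ring_nf

lemma AffineEquiv.map_two_smul_sub (e : Pt ≃ᵃ[ℝ] Pt) (Z p : Pt) :
    e ((2 : ℝ) • Z - p) = (2 : ℝ) • e Z - e p := by
  have h := e.toAffineMap.apply_lineMap p Z 2
  simp only [AffineMap.lineMap_apply_module] at h
  convert h using 1
  · simp only [AffineEquiv.coe_toAffineMap]
    congr 1
    module
  · simp only [AffineEquiv.coe_toAffineMap]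
    module

lemma IsCenterOf.image {Z : Pt} {S : Set Pt} (h : IsCenterOf Z S) (e : Pt ≃ᵃ[ℝ] Pt) :
    IsCenterOf (e Z) ((fun p => e p) '' S) := by
  rintro _ ⟨p, hp, rfl⟩
  exact ⟨_, h p hp, e.map_two_smul_sub Z p⟩

lemma AffineEquiv.map_homoth (e : Pt ≃ᵃ[ℝ] Pt) (Z : Pt) (r : ℝ) (X : Pt) :
    e (homoth Z r X) = homoth (e Z) r (e X) := by
  have h := e.toAffineMap.apply_lineMap Z X r
  simp only [AffineMap.lineMap_apply_module'] at h
  simpa only [homoth, add_comm, AffineEquiv.coe_toAffineMap] using h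

lemma Collinear.det_eq_zero {p q r : Pt} (h : Collinear ℝ {p, q, r}) :
    (q.1 - p.1) * (r.2 - p.2) = (q.2 - p.2) * (r.1 - p.1) := by
  obtain ⟨v, hv⟩ := (collinear_iff_of_mem (p₀ := p) (by simp)).1 h
  obtain ⟨s, rfl⟩ := hv q (by simp)
  obtain ⟨t, rfl⟩ := hv r (by simp)
  simp
  ring

lemma Collinear.of_affineEquiv {p q r : Pt} {e : Pt ≃ᵃ[ℝ] Pt}
    (h : Collinear ℝ {e p, e q, e r}) : Collinear ℝ {p, q, r} := by
  obtain ⟨p₀, v, h⟩ := (collinear_iff_exists_forall_eq_smul_vadd _).1 h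
  refine (collinear_iff_exists_forall_eq_smul_vadd _).2
    ⟨e.symm p₀, e.symm.linear v, fun a ha => ?_⟩
  obtain ⟨t, ht⟩ := h (e a) (by rcases ha with rfl | rfl | rfl <;> simp)
  exact ⟨t, by rw [← map_smul, ← e.symm.map_vadd, ← ht, e.symm_apply_apply]⟩

theorem nine_point_conic_of_ABCP'_and_circumconic
    (A B C P P' Q Q' D E F D₃ E₃ F₃ : Pt) (x y z : ℝ)
    (hABC : AffineIndependent ℝ ![A, B, C])
    (hsum : x + y + z = 1)
    (hPco : P = x • A + y • B + z • C)
    (hx0 : x ≠ 0) (hy0 : y ≠ 0) (hz0 : z ≠ 0)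
    (hx1 : x ≠ 1) (hy1 : y ≠ 1) (hz1 : z ≠ 1)
    (hst : x * y + y * z + z * x ≠ 0)
    (hP' : P' = (y * z / (x * y + y * z + z * x)) • A
        + (x * z / (x * y + y * z + z * x)) • B
        + (x * y / (x * y + y * z + z * x)) • C)
    (hQ : Q = homoth (cent A B C) (-(1 / 2)) P')
    (hQ' : Q' = homoth (cent A B C) (-(1 / 2)) P)
    (hD : Collinear ℝ {A, P, D} ∧ Collinear ℝ {B, C, D})
    (hE : Collinear ℝ {B, P, E} ∧ Collinear ℝ {A, C, E})
    (hF : Collinear ℝ {C, P, F} ∧ Collinear ℝ {A, B, F})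
    (hD₃ : Collinear ℝ {A, P', D₃} ∧ Collinear ℝ {B, C, D₃})
    (hE₃ : Collinear ℝ {B, P', E₃} ∧ Collinear ℝ {A, C, E₃})
    (hF₃ : Collinear ℝ {C, P', F₃} ∧ Collinear ℝ {A, B, F₃})
    (TP' : Pt ≃ᵃ[ℝ] Pt) (hTP' : TP' A = D₃ ∧ TP' B = E₃ ∧ TP' C = F₃) :
    ∃ N : Set Pt, IsConic N ∧
      midpoint ℝ B C ∈ N ∧ midpoint ℝ C A ∈ N ∧ midpoint ℝ A B ∈ N ∧
      D₃ ∈ N ∧ E₃ ∈ N ∧ F₃ ∈ N ∧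
      midpoint ℝ A P' ∈ N ∧ midpoint ℝ B P' ∈ N ∧ midpoint ℝ C P' ∈ N ∧
      IsCenterOf (homoth (cent A B C) (-(1 / 2)) Q) N ∧
      IsConic ((fun p => TP'.symm p) '' N) ∧
      A ∈ (fun p => TP'.symm p) '' N ∧ B ∈ (fun p => TP'.symm p) '' N ∧
      C ∈ (fun p => TP'.symm p) '' N ∧
      IsCenterOf (TP'.symm (homoth (cent A B C) (-(1 / 2)) Q)) ((fun p => TP'.symm p) '' N) := by
  obtain ⟨e, he⟩ := exists_affineEquiv_of_affineIndependent hABC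
  set σ := x * y + y * z + z * x with hσ
  have heA : A = e (0, 0) := by simp [he]
  have heB : B = e (1, 0) := by simp [he]
  have heC : C = e (0, 1) := by simp [he]
  have heP' : P' = e (x * z / σ, x * y / σ) := by
    have : y * z / σ = 1 - x * z / σ - x * y / σ := by
      field_simp
      rw [hσ]
      ring
    rw [he, hP', this]
    module
  have heG : cent A B C = e (1 / 3, 1 / 3) := by
    rw [he, cent]
    module
  have hxy : x + y ≠ 0 := fun h => hz1 (by linarith)
  have hxz : x + z ≠ 0 := fun h => hy1 (by linarith)
  have hyz : y + z ≠ 0 := fun h => hx1 (by linarith)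
  have heD : D₃ = e (z / (y + z), y / (y + z)) := by
    obtain ⟨⟨s, t⟩, rfl⟩ := e.surjective D₃
    rw [heA, heP', heB, heC] at hD₃
    have h₁ := hD₃.1.of_affineEquiv.det_eq_zero
    have h₂ := hD₃.2.of_affineEquiv.det_eq_zero
    simp only [sub_zero, zero_sub] at h₁ h₂
    field_simp at h₁
    congr 2
    · rw [eq_div_iff hyz]
      linear_combination -z * h₂ - h₁
    · rw [eq_div_iff hyz]
      linear_combination -y * h₂ + h₁
  have heE : E₃ = e (0, x / (x + z)) := by
    obtain ⟨⟨s, t⟩, rfl⟩ := e.surjective E₃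
    rw [heB, heP', heA, heC] at hE₃
    have h₁ := hE₃.1.of_affineEquiv.det_eq_zero
    have h₂ := hE₃.2.of_affineEquiv.det_eq_zero
    simp only [sub_zero, sub_self, zero_mul, one_mul] at h₁ h₂
    field_simp at h₁
    congr 2
    · linear_combination -h₂
    · rw [eq_div_iff hxz]
      apply mul_left_cancel₀ hy0
      linear_combination -h₁ + x * y * h₂ - t * hσ
  have heF : F₃ = e (x / (x + y), 0) := by
    obtain ⟨⟨s, t⟩, rfl⟩ := e.surjective F₃
    rw [heC, heP', heA, heB] at hF₃
    have h₁ := hF₃.1.of_affineEquiv.det_eq_zero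
    have h₂ := hF₃.2.of_affineEquiv.det_eq_zero
    simp only [sub_zero, sub_self, zero_mul, one_mul] at h₁ h₂
    field_simp at h₁
    congr 2
    · rw [eq_div_iff hxy]
      apply mul_left_cancel₀ hz0
      linear_combination h₁ - x * z * h₂ - s * hσ
  have hconic : IsConic {p | qval (ninePointCoeff x y z) p = 0} :=
    ⟨_, fun h => hxy (by simpa [ninePointCoeff] using h.1), rfl⟩
  have hcenter : IsCenterOf (homoth (1 / 3, 1 / 3) (-(1 / 2))
      (homoth (1 / 3, 1 / 3) (-(1 / 2)) (x * z / σ, x * y / σ)))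
      {p | qval (ninePointCoeff x y z) p = 0} := by
    rintro ⟨s, t⟩ h
    simp only [Set.mem_ofPred_eq] at h ⊢
    rw [← h]
    simp only [homoth, Prod.smul_mk, Prod.mk_add_mk, Prod.mk_sub_mk, smul_eq_mul,
      qval_ninePointCoeff]
    field_simp
    rw [hσ]
    ring
  have hmem (s t : ℝ) (h : qval (ninePointCoeff x y z) (s, t) = 0) :
      e (s, t) ∈ (fun p => e p) '' {p | qval (ninePointCoeff x y z) p = 0} := ⟨_, h, rfl⟩
  have hDN := hmem (z / (y + z)) (y / (y + z)) (by
    rw [qval_ninePointCoeff]; field_simp; ring)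
  have hEN := hmem 0 (x / (x + z)) (by
    rw [qval_ninePointCoeff]; field_simp; ring)
  have hFN := hmem (x / (x + y)) 0 (by
    rw [qval_ninePointCoeff]; field_simp; ring)
  rw [← heD] at hDN
  rw [← heE] at hEN
  rw [← heF] at hFN
  have hcenter' := hcenter.image e
  rw [e.map_homoth, e.map_homoth, ← heG, ← heP', ← hQ] at hcenter'
  have hmid (a b c d : ℝ) : midpoint ℝ (e (a, b)) (e (c, d)) = e ((a + c) / 2, (b + d) / 2) := by
    rw [← e.map_midpoint, midpoint_eq_smul_add]
    congr 1
    ext <;> simp <;> ring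
  refine ⟨_, hconic.image e, ?_, ?_, ?_, hDN, hEN, hFN, ?_, ?_, ?_, hcenter',
    (hconic.image e).image TP'.symm, ⟨D₃, hDN, ?_⟩, ⟨E₃, hEN, ?_⟩, ⟨F₃, hFN, ?_⟩,
    hcenter'.image TP'.symm⟩
  · rw [heB, heC, hmid]
    exact hmem _ _ (by rw [qval_ninePointCoeff]; ring)
  · rw [heC, heA, hmid]
    exact hmem _ _ (by rw [qval_ninePointCoeff]; ring)
  · rw [heA, heB, hmid]
    exact hmem _ _ (by rw [qval_ninePointCoeff]; ring)
  · rw [heA, heP', hmid]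
    exact hmem _ _ (by rw [qval_ninePointCoeff]; field_simp; rw [hσ]; ring)
  · rw [heB, heP', hmid]
    exact hmem _ _ (by rw [qval_ninePointCoeff]; field_simp; rw [hσ]; ring)
  · rw [heC, heP', hmid]
    exact hmem _ _ (by rw [qval_ninePointCoeff]; field_simp; rw [hσ]; ring)
  · simp [← hTP'.1]
  · simp [← hTP'.2.1]
  · simp [← hTP'.2.2]
end
end

section
/- Assume P does not lie on a median of ABC (a line joining a vertex to the midpoint of the opposite side). Then η(O) = O′ and η(H) = H′; consequently the lines OO′ and HH′ are parallel to the line PP′. -/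
noncomputable section

/-- The cross product of two plane vectors. -/
def cross (u v : Pt) : ℝ := u.1 * v.2 - u.2 * v.1

theorem Par.cross_eq_zero {u v : Pt} (h : Par u v) : cross u v = 0 := by
  obtain ⟨t, rfl | rfl⟩ := h <;> simp [cross] <;> ring

theorem Par.smul_left {u v : Pt} (h : Par u v) {r : ℝ} (hr : r ≠ 0) : Par (r • u) v := by
  obtain ⟨t, rfl | rfl⟩ := h
  · exact ⟨r * t, Or.inl (smul_smul r t v)⟩
  · exact ⟨t / r, Or.inr (by rw [smul_smul, div_mul_cancel₀ t hr])⟩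

theorem cross_eq_zero_of_collinear {X Y Z : Pt} (h : Collinear ℝ {X, Y, Z}) :
    cross (Y - X) (Z - X) = 0 := by
  obtain ⟨v, hv⟩ := (collinear_iff_of_mem (p₀ := X) (by simp)).1 h
  obtain ⟨r, hr⟩ := hv Y (by simp)
  obtain ⟨t, ht⟩ := hv Z (by simp)
  simp only [vadd_eq_add] at hr ht
  subst hr ht
  simp [cross]
  ring

theorem cross_ne_zero_of_affineIndependent {A B C : Pt}
    (h : AffineIndependent ℝ ![A, B, C]) : cross (B - A) (C - A) ≠ 0 := by
  intro h0
  rw [affineIndependent_iff_not_collinear_set] at h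
  apply h
  rw [collinear_iff_of_mem (p₀ := A) (by simp)]
  by_cases hBA : B - A = 0
  · refine ⟨C - A, ?_⟩
    rintro p (rfl | rfl | rfl)
    · exact ⟨0, by simp⟩
    · exact ⟨0, by simp [sub_eq_zero.1 hBA]⟩
    · exact ⟨1, by simp⟩
  · refine ⟨B - A, ?_⟩
    rintro p (rfl | rfl | rfl)
    · exact ⟨0, by simp⟩
    · exact ⟨1, by simp⟩
    · simp only [cross, Prod.fst_sub, Prod.snd_sub] at h0
      by_cases h1 : B.1 - A.1 = 0
      · have h2 : B.2 - A.2 ≠ 0 := fun h2 => hBA (Prod.ext h1 h2)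
        refine ⟨(p.2 - A.2) / (B.2 - A.2), Prod.ext ?_ ?_⟩ <;> simp <;> field_simp <;> linarith
      · refine ⟨(p.1 - A.1) / (B.1 - A.1), Prod.ext ?_ ?_⟩ <;> simp <;> field_simp <;> linarith

/-- Every point has normalized barycentric coordinates with respect to a nondegenerate triangle. -/
theorem exists_barycentric {A B C : Pt} (h : cross (B - A) (C - A) ≠ 0) (X : Pt) :
    ∃ a b c : ℝ, a + b + c = 1 ∧ X = a • A + b • B + c • C := by
  refine ⟨1 - cross (X - A) (C - A) / cross (B - A) (C - A)
      - cross (B - A) (X - A) / cross (B - A) (C - A),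
    cross (X - A) (C - A) / cross (B - A) (C - A),
    cross (B - A) (X - A) / cross (B - A) (C - A), by ring, ?_⟩
  apply Prod.ext <;> simp <;> field_simp <;> simp [cross] <;> ring

theorem cross_barycentric (A B C : Pt) {a b c a' b' c' : ℝ} (h : a + b + c = 0)
    (h' : a' + b' + c' = 0) :
    cross (a • A + b • B + c • C) (a' • A + b' • B + c' • C)
      = (b * c' - c * b') * cross (B - A) (C - A) := by
  obtain rfl : a = -b - c := by linarith
  obtain rfl : a' = -b' - c' := by linarith
  simp [cross]
  ring

/-- The foot `D` on `BC` of the cevian through the point with coordinates `(x, y, z)`. -/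
theorem trace_eq {A B C D : Pt} (h : cross (B - A) (C - A) ≠ 0) {x y z : ℝ}
    (hsum : x + y + z = 1) (hyz : y + z ≠ 0)
    (hP : Collinear ℝ {A, x • A + y • B + z • C, D}) (hBC : Collinear ℝ {B, C, D}) :
    D = (y / (y + z)) • B + (z / (y + z)) • C := by
  obtain ⟨a, b, c, habc, rfl⟩ := exists_barycentric h D
  have h1 := cross_eq_zero_of_collinear hP
  have h2 := cross_eq_zero_of_collinear hBC
  rw [show x • A + y • B + z • C - A = (x - 1) • A + y • B + z • C by module,
    show a • A + b • B + c • C - A = (a - 1) • A + b • B + c • C by module,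
    cross_barycentric A B C (by linarith) (by linarith)] at h1
  rw [show C - B = (0 : ℝ) • A + (-1 : ℝ) • B + (1 : ℝ) • C by module,
    show a • A + b • B + c • C - B = a • A + (b - 1) • B + c • C by module,
    cross_barycentric A B C (by norm_num) (by linarith)] at h2
  have h1 := (mul_eq_zero.1 h1).resolve_right h
  have h2 := (mul_eq_zero.1 h2).resolve_right h
  obtain rfl : a = 0 := by linarith
  obtain rfl : b = y / (y + z) := by
    rw [eq_div_iff hyz]; linear_combination y * habc - h1
  obtain rfl : c = z / (y + z) := by
    rw [eq_div_iff hyz]; linear_combination z * habc + h1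
  simp

/-- The condition `AH ∥ QD` in barycentric coordinates. -/
theorem barycentric_of_par {A B C P D Q H : Pt} (h : cross (B - A) (C - A) ≠ 0) {x y z s a b c : ℝ}
    (hs : s = x * y + y * z + z * x) (hs0 : s ≠ 0)
    (hsum : x + y + z = 1) (hyz : y + z ≠ 0) (hP : P = x • A + y • B + z • C)
    (hAPD : Collinear ℝ {A, P, D}) (hBC : Collinear ℝ {B, C, D})
    (hQ : (2 * s) • Q = (x * (y + z)) • A + (y * (z + x)) • B + (z * (x + y)) • C)
    (habc : a + b + c = 1) (hH : H = a • A + b • B + c • C) (hpar : Par (H - A) (D - Q)) :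
    y * (s - z ^ 2) * c = z * (s - y ^ 2) * b := by
  subst hP hH
  have hD := trace_eq h hsum hyz hAPD hBC
  have hQ2 : Q = (x * (y + z) / (2 * s)) • A + (y * (z + x) / (2 * s)) • B
      + (z * (x + y) / (2 * s)) • C := by
    rw [← inv_smul_smul₀ (mul_ne_zero two_ne_zero hs0) Q, hQ]
    module
  have h1 := hpar.cross_eq_zero
  rw [hD, hQ2, show a • A + b • B + c • C - A = (a - 1) • A + b • B + c • C by module,
    show (y / (y + z)) • B + (z / (y + z)) • C - ((x * (y + z) / (2 * s)) • A
      + (y * (z + x) / (2 * s)) • B + (z * (x + y) / (2 * s)) • C)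
      = (-(x * (y + z) / (2 * s))) • A + (y / (y + z) - y * (z + x) / (2 * s)) • B
        + (z / (y + z) - z * (x + y) / (2 * s)) • C by module,
    cross_barycentric A B C (by linarith) (by field_simp; rw [hs]; ring)] at h1
  have h1 := (mul_eq_zero.1 h1).resolve_right h
  field_simp at h1
  rw [hs] at h1 ⊢
  linear_combination -h1

/-- The coordinates of the generalized orthocenter, up to the common factor `4xyzs`. -/
theorem orthocenter_coordinate {x y z s a b c : ℝ} (hs : s = x * y + y * z + z * x)
    (hsum : x + y + z = 1) (habc : a + b + c = 1)
    (hC : x * (s - y ^ 2) * b = y * (s - x ^ 2) * a)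
    (hB : z * (s - x ^ 2) * a = x * (s - z ^ 2) * c) :
    4 * (x * y * z) * s * a = 2 * s ^ 2 * x + (s + x * y * z) * (y * z) + s * (x * y * z - s) := by
  have hW : x * (s - y ^ 2) * (s - z ^ 2) + y * (s - x ^ 2) * (s - z ^ 2)
      + z * (s - x ^ 2) * (s - y ^ 2) = 4 * (x * y * z) * s := by
    rw [hs]
    ring
  have hN : x * (s - y ^ 2) * (s - z ^ 2)
      = 2 * s ^ 2 * x + (s + x * y * z) * (y * z) + s * (x * y * z - s) := by
    obtain rfl : z = 1 - x - y := by linarith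
    rw [hs]
    ring
  linear_combination hN - a * hW + x * (s - y ^ 2) * (s - z ^ 2) * habc
    - (s - z ^ 2) * hC + (s - y ^ 2) * hB

/-- The generalized orthocenter as an affine combination of the centroid, the point and its
isotomic conjugate. -/
theorem orthocenter_eq {A B C P P' Q D E F H : Pt} {x y z s ρ : ℝ}
    (h : cross (B - A) (C - A) ≠ 0) (hs : s = x * y + y * z + z * x) (hs0 : s ≠ 0)
    (hsum : x + y + z = 1) (hx0 : x ≠ 0) (hy0 : y ≠ 0) (hz0 : z ≠ 0)
    (hyz : y + z ≠ 0) (hzx : z + x ≠ 0) (hxy : x + y ≠ 0)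
    (hρ : s = ρ * (x * y * z))
    (hP : P = x • A + y • B + z • C)
    (hP' : P' = (y * z / s) • A + (x * z / s) • B + (x * y / s) • C)
    (hQ : Q = homoth (cent A B C) (-(1 / 2)) P')
    (hD : Collinear ℝ {A, P, D} ∧ Collinear ℝ {B, C, D})
    (hE : Collinear ℝ {B, P, E} ∧ Collinear ℝ {A, C, E})
    (hF : Collinear ℝ {C, P, F} ∧ Collinear ℝ {A, B, F})
    (hH : Par (H - A) (D - Q) ∧ Par (H - B) (E - Q) ∧ Par (H - C) (F - Q)) :
    H = cent A B C + (ρ / 2) • (P - cent A B C) + ((ρ + 1) / 4) • (P' - cent A B C) := by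
  obtain ⟨a, b, c, habc, hHabc⟩ := exists_barycentric h H
  have hB : cross (C - B) (A - B) ≠ 0 := by
    convert h using 1
    simp [cross]
    ring
  have hC : cross (A - C) (B - C) ≠ 0 := by
    convert h using 1
    simp [cross]
    ring
  have hQ2 : (2 * s) • Q = (x * (y + z)) • A + (y * (z + x)) • B + (z * (x + y)) • C := by
    rw [hQ, hP', homoth, cent]
    match_scalars <;> field_simp <;> rw [hs] <;> ring
  have hA1 := barycentric_of_par h hs hs0 hsum hyz hP hD.1 hD.2 hQ2 habc hHabc hH.1
  have hB1 := barycentric_of_par (x := y) (y := z) (z := x) (a := b) (b := c) (c := a)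
    hB (by rw [hs]; ring) hs0 (by linarith) hzx (by rw [hP]; abel)
    hE.1 (by rw [Set.insert_comm]; exact hE.2) (by rw [hQ2]; abel) (by linarith)
    (by rw [hHabc]; abel) hH.2.1
  have hC1 := barycentric_of_par (x := z) (y := x) (z := y) (a := c) (b := a) (c := b)
    hC (by rw [hs]; ring) hs0 (by linarith) hxy (by rw [hP]; abel)
    hF.1 hF.2 (by rw [hQ2]; abel) (by linarith)
    (by rw [hHabc]; abel) hH.2.2
  have ha := orthocenter_coordinate hs hsum habc hC1 hB1
  have hb := orthocenter_coordinate (x := y) (y := z) (z := x) (a := b) (b := c) (c := a)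
    (by rw [hs]; ring) (by linarith) (by linarith) hA1 hC1
  have hc := orthocenter_coordinate (x := z) (y := x) (z := y) (a := c) (b := a) (c := b)
    (by rw [hs]; ring) (by linarith) (by linarith) hB1 hA1
  have hp : x * y * z ≠ 0 := mul_ne_zero (mul_ne_zero hx0 hy0) hz0
  have h4 : 4 * (x * y * z) * s ≠ 0 := mul_ne_zero (mul_ne_zero four_ne_zero hp) hs0
  obtain rfl : ρ = s / (x * y * z) := by rw [eq_div_iff hp, hρ]
  rw [hHabc, hP, hP', cent]
  match_scalars
  · apply mul_left_cancel₀ h4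
    simp only [mul_one]
    rw [ha]
    field_simp
    ring
  · apply mul_left_cancel₀ h4
    simp only [mul_one]
    rw [show 4 * (x * y * z) * s * b = 4 * (y * z * x) * s * b by ring, hb]
    field_simp
    ring
  · apply mul_left_cancel₀ h4
    simp only [mul_one]
    rw [show 4 * (x * y * z) * s * c = 4 * (z * x * y) * s * c by ring, hc]
    field_simp
    ring

/-- The anticomplement of a point satisfying a circumcenter condition satisfies the corresponding
orthocenter condition. -/
theorem par_anticomplement {A B C X v : Pt} (h : Par (midpoint ℝ B C - X) v) :
    Par (A + B + C - (2 : ℝ) • X - A) v := by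
  convert h.smul_left (two_ne_zero (α := ℝ)) using 1
  rw [midpoint_eq_smul_add, invOf_eq_inv]
  module

/-- An affine map that fixes `G` and interchanges two points interchanges the coefficients with
respect to the vectors from `G` to these points. -/
theorem affine_swap_apply {η : Pt →ᵃ[ℝ] Pt} {G P P' : Pt} (hG : η G = G) (hP : η P = P')
    (hP' : η P' = P) (a b : ℝ) :
    η (G + a • (P - G) + b • (P' - G)) = G + a • (P' - G) + b • (P - G) := by
  have hlin (X : Pt) : η X = η.linear (X - G) + G := by
    have := η.linearMap_vsub X G
    rw [hG] at this
    simp only [vsub_eq_sub] at this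
    rw [this, sub_add_cancel]
  have h1 : η.linear (P - G) = P' - G := by rw [← hP, hlin P, add_sub_cancel_right]
  have h2 : η.linear (P' - G) = P - G := by
    conv_rhs => rw [← hP', hlin P', add_sub_cancel_right]
  rw [hlin, show G + a • (P - G) + b • (P' - G) - G = a • (P - G) + b • (P' - G) by abel,
    map_add, map_smul, map_smul, h1, h2]
  abel

theorem eta_maps_O_to_O'_and_H_to_H'
    (A B C P P' Q Q' D E F D₃ E₃ F₃ : Pt) (x y z : ℝ)
    (hABC : AffineIndependent ℝ ![A, B, C])
    (hsum : x + y + z = 1)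
    (hPco : P = x • A + y • B + z • C)
    (hx0 : x ≠ 0) (hy0 : y ≠ 0) (hz0 : z ≠ 0)
    (hx1 : x ≠ 1) (hy1 : y ≠ 1) (hz1 : z ≠ 1)
    (hst : x * y + y * z + z * x ≠ 0)
    (hP' : P' = (y * z / (x * y + y * z + z * x)) • A
        + (x * z / (x * y + y * z + z * x)) • B
        + (x * y / (x * y + y * z + z * x)) • C)
    (hQ : Q = homoth (cent A B C) (-(1 / 2)) P')
    (hQ' : Q' = homoth (cent A B C) (-(1 / 2)) P)
    (hD : Collinear ℝ {A, P, D} ∧ Collinear ℝ {B, C, D})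
    (hE : Collinear ℝ {B, P, E} ∧ Collinear ℝ {A, C, E})
    (hF : Collinear ℝ {C, P, F} ∧ Collinear ℝ {A, B, F})
    (hD₃ : Collinear ℝ {A, P', D₃} ∧ Collinear ℝ {B, C, D₃})
    (hE₃ : Collinear ℝ {B, P', E₃} ∧ Collinear ℝ {A, C, E₃})
    (hF₃ : Collinear ℝ {C, P', F₃} ∧ Collinear ℝ {A, B, F₃})
    (hxy : x ≠ y) (hyz : y ≠ z) (hxz : x ≠ z)
    (O H : Pt)
    (hO : Par (midpoint ℝ B C - O) (D - Q) ∧ Par (midpoint ℝ C A - O) (E - Q) ∧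
          Par (midpoint ℝ A B - O) (F - Q))
    (hH : Par (H - A) (D - Q) ∧ Par (H - B) (E - Q) ∧ Par (H - C) (F - Q))
    (O' H' : Pt)
    (hO' : Par (midpoint ℝ B C - O') (D₃ - Q') ∧ Par (midpoint ℝ C A - O') (E₃ - Q') ∧
           Par (midpoint ℝ A B - O') (F₃ - Q'))
    (hH' : Par (H' - A) (D₃ - Q') ∧ Par (H' - B) (E₃ - Q') ∧ Par (H' - C) (F₃ - Q'))
    (V : Pt) (hV : Collinear ℝ {P, Q, V} ∧ Collinear ℝ {P', Q', V})
    (η : Pt →ᵃ[ℝ] Pt)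
    (hinv : ∀ X : Pt, η (η X) = X)
    (hfix : ∀ X ∈ lineThru (cent A B C) V, η X = X)
    (hηP : η P = P') :
    η O = O' ∧ η H = H' ∧ Par (O' - O) (P' - P) ∧ Par (H' - H) (P' - P) := by
  have h := cross_ne_zero_of_affineIndependent hABC
  have hG : η (cent A B C) = cent A B C := hfix _ ⟨0, by simp⟩
  have hηP' : η P' = P := by rw [← hηP, hinv]
  obtain ⟨s, hs⟩ : ∃ s, s = x * y + y * z + z * x := ⟨_, rfl⟩
  rw [← hs] at hst hP'
  have hyz0 : y + z ≠ 0 := fun h0 => hx1 (by linarith)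
  have hzx0 : z + x ≠ 0 := fun h0 => hy1 (by linarith)
  have hxy0 : x + y ≠ 0 := fun h0 => hz1 (by linarith)
  have hp : x * y * z ≠ 0 := mul_ne_zero (mul_ne_zero hx0 hy0) hz0
  have key {X : Pt} (hX : Par (X - A) (D - Q) ∧ Par (X - B) (E - Q) ∧ Par (X - C) (F - Q)) :=
    orthocenter_eq (ρ := s / (x * y * z)) h hs hst hsum hx0 hy0 hz0 hyz0 hzx0 hxy0
      (by field_simp) hPco hP' hQ hD hE hF hX
  have key' {X : Pt}
      (hX : Par (X - A) (D₃ - Q') ∧ Par (X - B) (E₃ - Q') ∧ Par (X - C) (F₃ - Q')) :=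
    orthocenter_eq (x := y * z / s) (y := x * z / s) (z := x * y / s) (s := x * y * z / s ^ 2)
      (ρ := s / (x * y * z)) (P' := P) h
      (by field_simp; linear_combination -hsum) (div_ne_zero hp (pow_ne_zero 2 hst))
      (by field_simp; rw [hs]; ring) (by positivity) (by positivity) (by positivity)
      (by rw [show x * z / s + x * y / s = x * (y + z) / s by ring]; positivity)
      (by rw [show x * y / s + y * z / s = y * (z + x) / s by ring]; positivity)
      (by rw [show y * z / s + x * z / s = z * (x + y) / s by ring]; positivity)
      (by field_simp) hP'
      (by rw [hPco]; congr 2 <;> field_simp) hQ' hD₃ hE₃ hF₃ hX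
  have eH := key hH
  have eH' := key' hH'
  have eO := key (X := A + B + C - (2 : ℝ) • O)
    ⟨par_anticomplement hO.1,
      by rw [show A + B + C = B + C + A by abel]; exact par_anticomplement hO.2.1,
      by rw [show A + B + C = C + A + B by abel]; exact par_anticomplement hO.2.2⟩
  have eO' := key' (X := A + B + C - (2 : ℝ) • O')
    ⟨par_anticomplement hO'.1,
      by rw [show A + B + C = B + C + A by abel]; exact par_anticomplement hO'.2.1,
      by rw [show A + B + C = C + A + B by abel]; exact par_anticomplement hO'.2.2⟩
  have hOH : O = (3 / 2 : ℝ) • cent A B C - (1 / 2 : ℝ) • H := by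
    rw [eH, ← eO, cent]
    module
  have hOH' : O' = (3 / 2 : ℝ) • cent A B C - (1 / 2 : ℝ) • H' := by
    rw [eH', ← eO', cent]
    module
  set a := s / (x * y * z) / 2
  set b := (s / (x * y * z) + 1) / 4
  have eO2 : O = cent A B C + (-a / 2) • (P - cent A B C) + (-b / 2) • (P' - cent A B C) := by
    rw [hOH, eH]
    module
  have eO2' : O' = cent A B C + (-a / 2) • (P' - cent A B C) + (-b / 2) • (P - cent A B C) := by
    rw [hOH', eH']
    module
  refine ⟨?_, ?_, ⟨-a / 2 + b / 2, Or.inl ?_⟩, ⟨a - b, Or.inl ?_⟩⟩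
  · rw [eO2, eO2', affine_swap_apply hG hηP hηP']
  · rw [eH, eH', affine_swap_apply hG hηP hηP']
  · rw [eO2, eO2']
    module
  · rw [eH, eH']
    module
end
end

section
/- Let Q_a = T_{P′}⁻¹(A), Q_b = T_{P′}⁻¹(B), Q_c = T_{P′}⁻¹(C) (the vertices of the anticevian triangle of Q with respect to ABC), and let P_a = ι⁻¹(K⁻¹(Q_a)), P_b = ι⁻¹(K⁻¹(Q_b)), P_c = ι⁻¹(K⁻¹(Q_c)) be their anti-isotomcomplements. Assume each of P_a, P_b, P_c also satisfies the general-position hypotheses imposed on P. Then P, P_a, P_b, P_c all give rise to the same generalized circumcenter O and the same generalized orthocenter H. -/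
noncomputable section

/-- `O` and `H` are a generalized circumcenter and generalized orthocenter of the
admissible point `P` with respect to triangle `ABC`. -/
def IsGenOH (A B C P O H : Pt) : Prop :=
  ∃ (x y z : ℝ) (P' Q D E F : Pt),
    x + y + z = 1 ∧ P = x • A + y • B + z • C ∧
    x ≠ 0 ∧ y ≠ 0 ∧ z ≠ 0 ∧ x ≠ 1 ∧ y ≠ 1 ∧ z ≠ 1 ∧
    x * y + y * z + z * x ≠ 0 ∧
    P' = (y * z / (x * y + y * z + z * x)) • A
      + (x * z / (x * y + y * z + z * x)) • B
      + (x * y / (x * y + y * z + z * x)) • C ∧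
    Q = homoth (cent A B C) (-(1 / 2)) P' ∧
    Collinear ℝ {A, P, D} ∧ Collinear ℝ {B, C, D} ∧
    Collinear ℝ {B, P, E} ∧ Collinear ℝ {A, C, E} ∧
    Collinear ℝ {C, P, F} ∧ Collinear ℝ {A, B, F} ∧
    Par (midpoint ℝ B C - O) (D - Q) ∧
    Par (midpoint ℝ C A - O) (E - Q) ∧
    Par (midpoint ℝ A B - O) (F - Q) ∧
    Par (H - A) (D - Q) ∧ Par (H - B) (E - Q) ∧ Par (H - C) (F - Q)

/-- The point dividing `BC` with weights `y : z`; it is the trace on `BC` of a point with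
barycentric coordinates `(x : y : z)`. -/
def cevianFoot (B C : Pt) (y z : ℝ) : Pt := (y / (y + z)) • B + (z / (y + z)) • C

/-- The common direction of the lines joining the points with barycentric coordinates
`(±√p : ±√q : ±√r)` to the traces on `BC` of their anti-isotomcomplements. -/
def sideDir (A B C : Pt) (p q r : ℝ) : Pt :=
  (-2 * p) • A + (p + q - r) • B + (p + r - q) • C

lemma Par.smul_right {u v : Pt} {c : ℝ} (hc : c ≠ 0) (h : Par u v) : Par u (c • v) := by
  obtain ⟨t, rfl | rfl⟩ := h
  · exact ⟨t / c, Or.inl (by rw [smul_smul, div_mul_cancel₀ _ hc])⟩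
  · exact ⟨c * t, Or.inr (smul_smul _ _ _)⟩

lemma Par.of_smul_right {u v : Pt} {c : ℝ} (hc : c ≠ 0) (h : Par u (c • v)) : Par u v := by
  simpa [smul_smul, inv_mul_cancel₀ hc] using h.smul_right (inv_ne_zero hc)

lemma collinear_triple_iff_det (X Y Z : Pt) :
    Collinear ℝ {X, Y, Z} ↔
      (Y.1 - X.1) * (Z.2 - X.2) - (Z.1 - X.1) * (Y.2 - X.2) = 0 := by
  constructor
  · intro h
    obtain ⟨v, hv⟩ := (collinear_iff_of_mem (p₀ := X) (by simp)).1 h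
    obtain ⟨s, rfl⟩ := hv Y (by simp)
    obtain ⟨t, rfl⟩ := hv Z (by simp)
    simp
    ring
  · intro h
    by_cases hXY : Y = X
    · subst hXY
      simpa using collinear_pair ℝ Y Z
    refine (collinear_iff_of_mem (p₀ := X) (by simp)).2 ⟨Y - X, ?_⟩
    have hZ : ∃ t : ℝ, Z = t • (Y - X) +ᵥ X := by
      by_cases h1 : Y.1 - X.1 = 0
      · have h2 : Y.2 - X.2 ≠ 0 := fun h2 =>
          hXY (Prod.ext (sub_eq_zero.1 h1) (sub_eq_zero.1 h2))
        refine ⟨(Z.2 - X.2) / (Y.2 - X.2), Prod.ext ?_ ?_⟩ <;> simp <;> field_simp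
        · linear_combination -h
        · ring
      · refine ⟨(Z.1 - X.1) / (Y.1 - X.1), Prod.ext ?_ ?_⟩ <;> simp <;> field_simp
        · ring
        · linear_combination h
    rintro p (rfl | rfl | rfl)
    · exact ⟨0, by simp⟩
    · exact ⟨1, by simp⟩
    · exact hZ

lemma det_ne_zero_of_affineIndependent {A B C : Pt} (h : AffineIndependent ℝ ![A, B, C]) :
    (B.1 - A.1) * (C.2 - A.2) - (C.1 - A.1) * (B.2 - A.2) ≠ 0 := by
  rwa [Ne, ← collinear_triple_iff_det, ← affineIndependent_iff_not_collinear_set]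

lemma affineIndependent_rotate {A B C : Pt} (h : AffineIndependent ℝ ![A, B, C]) :
    AffineIndependent ℝ ![B, C, A] := by
  rw [affineIndependent_iff_not_collinear_set] at h ⊢
  rwa [Set.pair_comm C A, Set.insert_comm B A]

lemma barycentric_unique {A B C : Pt} (h : AffineIndependent ℝ ![A, B, C])
    {a b c a' b' c' : ℝ} (hs : a + b + c = a' + b' + c')
    (he : a • A + b • B + c • C = a' • A + b' • B + c' • C) :
    a = a' ∧ b = b' ∧ c = c' := by
  have hd := det_ne_zero_of_affineIndependent h
  have e1 := congrArg Prod.fst he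
  have e2 := congrArg Prod.snd he
  simp only [Prod.fst_add, Prod.snd_add, Prod.smul_fst, Prod.smul_snd, smul_eq_mul] at e1 e2
  refine ⟨mul_right_cancel₀ hd ?_, mul_right_cancel₀ hd ?_, mul_right_cancel₀ hd ?_⟩
  · linear_combination (B.2 - C.2) * e1 - (B.1 - C.1) * e2 + (B.1 * C.2 - C.1 * B.2) * hs
  · linear_combination (C.2 - A.2) * e1 - (C.1 - A.1) * e2 + (C.1 * A.2 - A.1 * C.2) * hs
  · linear_combination (A.2 - B.2) * e1 - (A.1 - B.1) * e2 + (A.1 * B.2 - B.1 * A.2) * hs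

lemma collinear_cevianFoot {B C : Pt} {y z : ℝ} (hyz : y + z ≠ 0) :
    Collinear ℝ {B, C, cevianFoot B C y z} := by
  rw [collinear_triple_iff_det]
  simp only [cevianFoot, Prod.fst_add, Prod.snd_add, Prod.smul_fst, Prod.smul_snd, smul_eq_mul]
  field_simp
  ring

lemma collinear_vertex_cevianFoot {A B C : Pt} {x y z : ℝ} (hs : x + y + z = 1)
    (hyz : y + z ≠ 0) :
    Collinear ℝ {A, x • A + y • B + z • C, cevianFoot B C y z} := by
  obtain rfl : x = 1 - (y + z) := by linear_combination hs
  rw [collinear_triple_iff_det]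
  simp only [cevianFoot, Prod.fst_add, Prod.snd_add, Prod.smul_fst, Prod.smul_snd, smul_eq_mul]
  field_simp
  ring

lemma eq_cevianFoot {A B C D : Pt} (h : AffineIndependent ℝ ![A, B, C]) {x y z : ℝ}
    (hs : x + y + z = 1) (hyz : y + z ≠ 0)
    (h₁ : Collinear ℝ {A, x • A + y • B + z • C, D}) (h₂ : Collinear ℝ {B, C, D}) :
    D = cevianFoot B C y z := by
  obtain rfl : x = 1 - (y + z) := by linear_combination hs
  have hd := det_ne_zero_of_affineIndependent h
  rw [collinear_triple_iff_det] at h₁ h₂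
  simp only [Prod.fst_add, Prod.snd_add, Prod.smul_fst, Prod.smul_snd, smul_eq_mul] at h₁
  have e₁ : (y + z) * D.1 = y * B.1 + z * C.1 := mul_right_cancel₀ hd (by
    linear_combination (C.1 - B.1) * h₁ - (y * (B.1 - A.1) + z * (C.1 - A.1)) * h₂)
  have e₂ : (y + z) * D.2 = y * B.2 + z * C.2 := mul_right_cancel₀ hd (by
    linear_combination (C.2 - B.2) * h₁ - (y * (B.2 - A.2) + z * (C.2 - A.2)) * h₂)
  refine Prod.ext ?_ ?_ <;>
    simp only [cevianFoot, Prod.fst_add, Prod.snd_add, Prod.smul_fst, Prod.smul_snd,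
      smul_eq_mul] <;> field_simp
  · linear_combination e₁
  · linear_combination e₂

lemma cevianFoot_sub_complement (A B C : Pt) {x y z s u v w : ℝ} (hyz : y + z ≠ 0)
    (hs : s = x * y + y * z + z * x) (hs0 : s ≠ 0)
    (hu : u = x * (y + z) / (2 * s)) (hv : v = y * (z + x) / (2 * s))
    (hw : w = z * (x + y) / (2 * s)) :
    (2 * u) • (cevianFoot B C y z - (u • A + v • B + w • C))
      = sideDir A B C (u ^ 2) (v ^ 2) (w ^ 2) := by
  have hB : 2 * u * (y / (y + z) - v) = u ^ 2 + v ^ 2 - w ^ 2 := by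
    rw [hu, hv, hw]
    field_simp
    rw [hs]
    ring
  have hC : 2 * u * (z / (y + z) - w) = u ^ 2 + w ^ 2 - v ^ 2 := by
    rw [hu, hv, hw]
    field_simp
    rw [hs]
    ring
  rw [sideDir, ← hB, ← hC, cevianFoot]
  module

lemma sideDir_smul (A B C : Pt) (k p q r : ℝ) :
    sideDir A B C (k * p) (k * q) (k * r) = k • sideDir A B C p q r := by
  simp only [sideDir]
  module

lemma par_cevianFoot_sub_iff (A B C : Pt) {x y z s u v w p q r k : ℝ} (hx : x ≠ 0)
    (hyz : y + z ≠ 0) (hs : s = x * y + y * z + z * x) (hs0 : s ≠ 0)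
    (hu : u = x * (y + z) / (2 * s)) (hv : v = y * (z + x) / (2 * s))
    (hw : w = z * (x + y) / (2 * s))
    (hk : k ≠ 0) (hp : u ^ 2 = k * p) (hq : v ^ 2 = k * q) (hr : w ^ 2 = k * r) (d : Pt) :
    Par d (cevianFoot B C y z - (u • A + v • B + w • C)) ↔ Par d (sideDir A B C p q r) := by
  have hu0 : 2 * u ≠ 0 := by
    rw [hu]
    positivity
  have key := cevianFoot_sub_complement A B C hyz hs hs0 hu hv hw
  rw [hp, hq, hr, sideDir_smul] at key
  refine ⟨fun h => ?_, fun h => ?_⟩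
  · exact Par.of_smul_right hk (key ▸ h.smul_right hu0)
  · exact Par.of_smul_right hu0 (key ▸ h.smul_right hk)

lemma homoth_cent_barycentric (A B C : Pt) (r a b c : ℝ) :
    homoth (cent A B C) r (a • A + b • B + c • C)
      = ((1 - r) / 3 + r * a) • A + ((1 - r) / 3 + r * b) • B + ((1 - r) / 3 + r * c) • C := by
  simp only [homoth, cent]
  module

lemma par_cevianFoot_sub_all_iff (A B C : Pt) {x y z s u v w p q r k : ℝ}
    (h0 : x ≠ 0 ∧ y ≠ 0 ∧ z ≠ 0) (hyz : y + z ≠ 0) (hzx : z + x ≠ 0) (hxy : x + y ≠ 0)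
    (hs : s = x * y + y * z + z * x) (hs0 : s ≠ 0)
    (hu : u = x * (y + z) / (2 * s)) (hv : v = y * (z + x) / (2 * s))
    (hw : w = z * (x + y) / (2 * s))
    (hk : k ≠ 0) (hp : u ^ 2 = k * p) (hq : v ^ 2 = k * q) (hr : w ^ 2 = k * r) (d e f : Pt) :
    (Par d (cevianFoot B C y z - (u • A + v • B + w • C)) ∧
      Par e (cevianFoot C A z x - (u • A + v • B + w • C)) ∧
      Par f (cevianFoot A B x y - (u • A + v • B + w • C))) ↔
    (Par d (sideDir A B C p q r) ∧ Par e (sideDir B C A q r p) ∧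
      Par f (sideDir C A B r p q)) := by
  have h₂ := par_cevianFoot_sub_iff B C A h0.2.1 hzx (by linear_combination hs) hs0 hv hw hu hk
    hq hr hp e
  have h₃ := par_cevianFoot_sub_iff C A B h0.2.2 hxy (by linear_combination hs) hs0 hw hu hv hk
    hr hp hq f
  rw [← par_cevianFoot_sub_iff A B C h0.1 hyz hs hs0 hu hv hw hk hp hq hr, ← h₂, ← h₃,
    show v • B + w • C + u • A = u • A + v • B + w • C by abel,
    show w • C + u • A + v • B = u • A + v • B + w • C by abel]

/-- The parallelism conditions defining the generalized circumcenter and orthocenter depend only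
on the squares of the barycentric coordinates of the isotomcomplement, up to a common factor. -/
lemma isGenOH_of_sq_proportional {A B C P Q O H : Pt} {x y z u v w p q r k : ℝ}
    (hABC : AffineIndependent ℝ ![A, B, C])
    (hsum : x + y + z = 1) (hP : P = x • A + y • B + z • C)
    (h0 : x ≠ 0 ∧ y ≠ 0 ∧ z ≠ 0) (h1 : x ≠ 1 ∧ y ≠ 1 ∧ z ≠ 1)
    (hst : x * y + y * z + z * x ≠ 0)
    (hP' : homoth (cent A B C) (-2) Q
        = (y * z / (x * y + y * z + z * x)) • A
        + (x * z / (x * y + y * z + z * x)) • B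
        + (x * y / (x * y + y * z + z * x)) • C)
    (hQ : Q = u • A + v • B + w • C) (huvw : u + v + w = 1)
    (hk : k ≠ 0) (hp : u ^ 2 = k * p) (hq : v ^ 2 = k * q) (hr : w ^ 2 = k * r)
    (hO : Par (midpoint ℝ B C - O) (sideDir A B C p q r) ∧
      Par (midpoint ℝ C A - O) (sideDir B C A q r p) ∧
      Par (midpoint ℝ A B - O) (sideDir C A B r p q))
    (hH : Par (H - A) (sideDir A B C p q r) ∧ Par (H - B) (sideDir B C A q r p) ∧
      Par (H - C) (sideDir C A B r p q)) :
    IsGenOH A B C P O H := by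
  have hyz : y + z ≠ 0 := fun h => h1.1 (by linarith)
  have hzx : z + x ≠ 0 := fun h => h1.2.1 (by linarith)
  have hxy : x + y ≠ 0 := fun h => h1.2.2 (by linarith)
  have hPQ : homoth (cent A B C) (-(1 / 2)) (homoth (cent A B C) (-2) Q) = Q := by
    simp only [homoth]
    module
  obtain ⟨ha, hb, hc⟩ : 1 - 2 * u = y * z / (x * y + y * z + z * x) ∧
      1 - 2 * v = x * z / (x * y + y * z + z * x) ∧
      1 - 2 * w = x * y / (x * y + y * z + z * x) := by
    refine barycentric_unique hABC ?_ ?_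
    · rw [← add_div, ← add_div, show y * z + x * z + x * y = x * y + y * z + z * x by ring,
        div_self hst]
      linear_combination -2 * huvw
    · rw [← hP', hQ, homoth_cent_barycentric]
      module
  obtain ⟨s, hs⟩ : ∃ s, s = x * y + y * z + z * x := ⟨_, rfl⟩
  have hs0 : s ≠ 0 := hs ▸ hst
  rw [← hs] at ha hb hc
  have hu : u = x * (y + z) / (2 * s) := by
    field_simp at ha ⊢
    linear_combination hs - ha
  have hv : v = y * (z + x) / (2 * s) := by
    field_simp at hb ⊢
    linear_combination hs - hb
  have hw : w = z * (x + y) / (2 * s) := by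
    field_simp at hc ⊢
    linear_combination hs - hc
  have hpar := par_cevianFoot_sub_all_iff A B C h0 hyz hzx hxy hs hs0 hu hv hw hk hp hq hr
  obtain ⟨hO₁, hO₂, hO₃⟩ := (hpar _ _ _).2 hO
  obtain ⟨hH₁, hH₂, hH₃⟩ := (hpar _ _ _).2 hH
  rw [← hQ] at hO₁ hO₂ hO₃ hH₁ hH₂ hH₃
  refine ⟨x, y, z, _, Q, cevianFoot B C y z, cevianFoot C A z x, cevianFoot A B x y, hsum, hP,
    h0.1, h0.2.1, h0.2.2, h1.1, h1.2.1, h1.2.2, hst, hP', hPQ.symm, ?_,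
    collinear_cevianFoot hyz, ?_, ?_, ?_, collinear_cevianFoot hxy, hO₁, hO₂, hO₃, hH₁, hH₂, hH₃⟩
  · exact hP ▸ collinear_vertex_cevianFoot hsum hyz
  · rw [hP, show x • A + y • B + z • C = y • B + z • C + x • A by abel]
    exact collinear_vertex_cevianFoot (by linear_combination hsum) hzx
  · rw [Set.insert_comm]
    exact collinear_cevianFoot hzx
  · rw [hP, show x • A + y • B + z • C = z • C + x • A + y • B by abel]
    exact collinear_vertex_cevianFoot (by linear_combination hsum) hxy

/-- The cevian traces of `(x : y : z)` in terms of barycentric coordinates. -/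
lemma eq_cevianFoot_all {A B C P D E F : Pt} (hABC : AffineIndependent ℝ ![A, B, C])
    {x y z : ℝ} (hsum : x + y + z = 1) (hP : P = x • A + y • B + z • C)
    (hyz : y + z ≠ 0) (hzx : z + x ≠ 0) (hxy : x + y ≠ 0)
    (hD : Collinear ℝ {A, P, D} ∧ Collinear ℝ {B, C, D})
    (hE : Collinear ℝ {B, P, E} ∧ Collinear ℝ {A, C, E})
    (hF : Collinear ℝ {C, P, F} ∧ Collinear ℝ {A, B, F}) :
    D = cevianFoot B C y z ∧ E = cevianFoot C A z x ∧ F = cevianFoot A B x y := by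
  have hBCA := affineIndependent_rotate hABC
  refine ⟨eq_cevianFoot hABC hsum hyz (hP ▸ hD.1) hD.2,
    eq_cevianFoot (x := y) hBCA (by linear_combination hsum) hzx ?_ ?_,
    eq_cevianFoot (x := z) (affineIndependent_rotate hBCA) (by linear_combination hsum) hxy
      ?_ hF.2⟩
  · rw [show y • B + z • C + x • A = x • A + y • B + z • C by abel, ← hP]
    exact hE.1
  · rw [Set.insert_comm]
    exact hE.2
  · rw [show z • C + x • A + y • B = x • A + y • B + z • C by abel, ← hP]
    exact hF.1

lemma affineEquiv_apply_barycentric (T : Pt ≃ᵃ[ℝ] Pt) (A B C : Pt) {a b c : ℝ}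
    (hs : a + b + c = 1) :
    T (a • A + b • B + c • C) = a • T A + b • T B + c • T C := by
  obtain rfl : a = 1 - b - c := by linear_combination hs
  have h : ((1 - b - c) • A + b • B + c • C : Pt)
      = (b • (B -ᵥ A) + c • (C -ᵥ A)) +ᵥ A := by
    simp only [vsub_eq_sub, vadd_eq_add]
    module
  have hl : ∀ X Y : Pt, T.linear (X -ᵥ Y) = T X -ᵥ T Y := T.toAffineMap.linearMap_vsub
  rw [h, AffineEquiv.map_vadd, map_add, map_smul, map_smul, hl, hl]
  simp only [vsub_eq_sub, vadd_eq_add]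
  module

/-- If an affine map sends `ABC` to the cevian triangle of the isotomic conjugate of
`(x : y : z)`, the preimage of `A` is the `A`-vertex of the anticevian triangle of the
isotomcomplement. -/
lemma symm_apply_eq_anticevian (T : Pt ≃ᵃ[ℝ] Pt) {A B C : Pt} {x y z : ℝ}
    (hy : y ≠ 0) (hz : z ≠ 0)
    (hyz : y + z ≠ 0) (hzx : z + x ≠ 0) (hxy : x + y ≠ 0)
    (hA : T A = cevianFoot B C z y) (hB : T B = cevianFoot C A x z)
    (hC : T C = cevianFoot A B y x) :
    T.symm A = (-(x * (y + z)) / (2 * y * z)) • A + (y * (z + x) / (2 * y * z)) • B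
      + (z * (x + y) / (2 * y * z)) • C := by
  rw [AffineEquiv.symm_apply_eq, affineEquiv_apply_barycentric, hA, hB, hC]
  · simp only [cevianFoot, add_comm z y, add_comm x z, add_comm y x]
    refine Prod.ext ?_ ?_ <;> simp <;> field_simp <;> ring
  · field_simp
    ring

lemma cevianFoot_mul_left (B C : Pt) {k : ℝ} (hk : k ≠ 0) (y z : ℝ) :
    cevianFoot B C (k * y) (k * z) = cevianFoot B C y z := by
  rw [cevianFoot, ← mul_add, mul_div_mul_left _ _ hk, mul_div_mul_left _ _ hk, cevianFoot]

lemma eq_cevianFoot_isotomic {A B C P' D E F : Pt} (hABC : AffineIndependent ℝ ![A, B, C])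
    {x y z s : ℝ} (hx : x ≠ 0) (hy : y ≠ 0) (hz : z ≠ 0)
    (hyz : y + z ≠ 0) (hzx : z + x ≠ 0) (hxy : x + y ≠ 0)
    (hs : s = x * y + y * z + z * x) (hs0 : s ≠ 0)
    (hP' : P' = (y * z / s) • A + (x * z / s) • B + (x * y / s) • C)
    (hD : Collinear ℝ {A, P', D} ∧ Collinear ℝ {B, C, D})
    (hE : Collinear ℝ {B, P', E} ∧ Collinear ℝ {A, C, E})
    (hF : Collinear ℝ {C, P', F} ∧ Collinear ℝ {A, B, F}) :
    D = cevianFoot B C z y ∧ E = cevianFoot C A x z ∧ F = cevianFoot A B y x := by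
  have e₁ : x * z / s + x * y / s = x / s * (y + z) := by ring
  have e₂ : x * y / s + y * z / s = y / s * (z + x) := by ring
  have e₃ : y * z / s + x * z / s = z / s * (x + y) := by ring
  have h := eq_cevianFoot_all hABC (by field_simp; linear_combination -hs) hP'
    (e₁ ▸ by positivity) (e₂ ▸ by positivity) (e₃ ▸ by positivity) hD hE hF
  rw [← cevianFoot_mul_left B C (div_ne_zero hx hs0),
    ← cevianFoot_mul_left C A (div_ne_zero hy hs0),
    ← cevianFoot_mul_left A B (div_ne_zero hz hs0)]
  convert h using 3 <;> ring_nf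

theorem four_points_same_O_and_H
    (A B C P P' Q Q' D E F D₃ E₃ F₃ : Pt) (x y z : ℝ)
    (hABC : AffineIndependent ℝ ![A, B, C])
    (hsum : x + y + z = 1)
    (hPco : P = x • A + y • B + z • C)
    (hx0 : x ≠ 0) (hy0 : y ≠ 0) (hz0 : z ≠ 0)
    (hx1 : x ≠ 1) (hy1 : y ≠ 1) (hz1 : z ≠ 1)
    (hst : x * y + y * z + z * x ≠ 0)
    (hP' : P' = (y * z / (x * y + y * z + z * x)) • A
        + (x * z / (x * y + y * z + z * x)) • B
        + (x * y / (x * y + y * z + z * x)) • C)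
    (hQ : Q = homoth (cent A B C) (-(1 / 2)) P')
    (hQ' : Q' = homoth (cent A B C) (-(1 / 2)) P)
    (hD : Collinear ℝ {A, P, D} ∧ Collinear ℝ {B, C, D})
    (hE : Collinear ℝ {B, P, E} ∧ Collinear ℝ {A, C, E})
    (hF : Collinear ℝ {C, P, F} ∧ Collinear ℝ {A, B, F})
    (hD₃ : Collinear ℝ {A, P', D₃} ∧ Collinear ℝ {B, C, D₃})
    (hE₃ : Collinear ℝ {B, P', E₃} ∧ Collinear ℝ {A, C, E₃})
    (hF₃ : Collinear ℝ {C, P', F₃} ∧ Collinear ℝ {A, B, F₃})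
    (TP' : Pt ≃ᵃ[ℝ] Pt) (hTP' : TP' A = D₃ ∧ TP' B = E₃ ∧ TP' C = F₃)
    (O H : Pt)
    (hO : Par (midpoint ℝ B C - O) (D - Q) ∧ Par (midpoint ℝ C A - O) (E - Q) ∧
          Par (midpoint ℝ A B - O) (F - Q))
    (hH : Par (H - A) (D - Q) ∧ Par (H - B) (E - Q) ∧ Par (H - C) (F - Q))
    (Qa Qb Qc Pa Pb Pc : Pt)
    (hQa : Qa = TP'.symm A) (hQb : Qb = TP'.symm B) (hQc : Qc = TP'.symm C)
    (xa ya za xb yb zb xc yc zc : ℝ)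
    (hsa : xa + ya + za = 1) (hPaco : Pa = xa • A + ya • B + za • C)
    (ha0 : xa ≠ 0 ∧ ya ≠ 0 ∧ za ≠ 0) (ha1 : xa ≠ 1 ∧ ya ≠ 1 ∧ za ≠ 1)
    (hsta : xa * ya + ya * za + za * xa ≠ 0)
    (hPa' : homoth (cent A B C) (-2) Qa
        = (ya * za / (xa * ya + ya * za + za * xa)) • A
        + (xa * za / (xa * ya + ya * za + za * xa)) • B
        + (xa * ya / (xa * ya + ya * za + za * xa)) • C)
    (hsb : xb + yb + zb = 1) (hPbco : Pb = xb • A + yb • B + zb • C)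
    (hb0 : xb ≠ 0 ∧ yb ≠ 0 ∧ zb ≠ 0) (hb1 : xb ≠ 1 ∧ yb ≠ 1 ∧ zb ≠ 1)
    (hstb : xb * yb + yb * zb + zb * xb ≠ 0)
    (hPb' : homoth (cent A B C) (-2) Qb
        = (yb * zb / (xb * yb + yb * zb + zb * xb)) • A
        + (xb * zb / (xb * yb + yb * zb + zb * xb)) • B
        + (xb * yb / (xb * yb + yb * zb + zb * xb)) • C)
    (hsc : xc + yc + zc = 1) (hPcco : Pc = xc • A + yc • B + zc • C)
    (hc0 : xc ≠ 0 ∧ yc ≠ 0 ∧ zc ≠ 0) (hc1 : xc ≠ 1 ∧ yc ≠ 1 ∧ zc ≠ 1)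
    (hstc : xc * yc + yc * zc + zc * xc ≠ 0)
    (hPc' : homoth (cent A B C) (-2) Qc
        = (yc * zc / (xc * yc + yc * zc + zc * xc)) • A
        + (xc * zc / (xc * yc + yc * zc + zc * xc)) • B
        + (xc * yc / (xc * yc + yc * zc + zc * xc)) • C) :
    IsGenOH A B C Pa O H ∧ IsGenOH A B C Pb O H ∧ IsGenOH A B C Pc O H := by
  have hyz : y + z ≠ 0 := fun h => hx1 (by linarith)
  have hzx : z + x ≠ 0 := fun h => hy1 (by linarith)
  have hxy : x + y ≠ 0 := fun h => hz1 (by linarith)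
  obtain ⟨s, hs⟩ : ∃ s, s = x * y + y * z + z * x := ⟨_, rfl⟩
  have hs0 : s ≠ 0 := hs ▸ hst
  rw [← hs] at hP'
  obtain ⟨rfl, rfl, rfl⟩ := eq_cevianFoot_all hABC hsum hPco hyz hzx hxy hD hE hF
  obtain ⟨rfl, rfl, rfl⟩ :=
    eq_cevianFoot_isotomic hABC hx0 hy0 hz0 hyz hzx hxy hs hs0 hP' hD₃ hE₃ hF₃
  obtain ⟨hTA, hTB, hTC⟩ := hTP'
  have hQbary : Q = (x * (y + z) / (2 * s)) • A + (y * (z + x) / (2 * s)) • B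
      + (z * (x + y) / (2 * s)) • C := by
    rw [hQ, hP', homoth_cent_barycentric]
    congr 3
    all_goals
      field_simp
      linear_combination 3 * hs
  have hpar := par_cevianFoot_sub_all_iff A B C (k := (1 / (2 * s)) ^ 2) (p := (x * (y + z)) ^ 2)
    (q := (y * (z + x)) ^ 2) (r := (z * (x + y)) ^ 2) ⟨hx0, hy0, hz0⟩ hyz hzx hxy hs hs0 rfl rfl
    rfl (by positivity) (by ring) (by ring) (by ring)
  rw [hQbary] at hO hH
  have hO' := (hpar _ _ _).1 hO
  have hH' := (hpar _ _ _).1 hH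
  rw [symm_apply_eq_anticevian TP' hy0 hz0 hyz hzx hxy hTA hTB hTC] at hQa
  rw [symm_apply_eq_anticevian TP' hz0 hx0 hzx hxy hyz hTB hTC hTA, add_rotate, add_rotate] at hQb
  rw [symm_apply_eq_anticevian TP' hx0 hy0 hxy hyz hzx hTC hTA hTB, add_rotate] at hQc
  refine ⟨isGenOH_of_sq_proportional (k := (1 / (2 * y * z)) ^ 2) hABC hsa hPaco ha0 ha1 hsta hPa'
      hQa ?_ (by positivity) (by ring) (by ring) (by ring) hO' hH',
    isGenOH_of_sq_proportional (k := (1 / (2 * z * x)) ^ 2) hABC hsb hPbco hb0 hb1 hstb hPb'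
      hQb ?_ (by positivity) (by ring) (by ring) (by ring) hO' hH',
    isGenOH_of_sq_proportional (k := (1 / (2 * x * y)) ^ 2) hABC hsc hPcco hc0 hc1 hstc hPc'
      hQc ?_ (by positivity) (by ring) (by ring) (by ring) hO' hH'⟩
  all_goals
    field_simp
    ring
end
end

section
/- Let ABC be a scalene triangle in the Euclidean plane ℝ². Then the unique conic through A, B, C, the Gergonne point Ge, and the incenter I₀ (the Feuerbach hyperbola of ABC) also passes through the orthocenter H₀, the Nagel point Na, and the Mittenpunkt Mp of ABC. -/
noncomputable section

open scoped RealInnerProductSpace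

/-- The Euclidean plane. -/
abbrev EPt : Type := EuclideanSpace ℝ (Fin 2)

/-- `S` is a conic in the Euclidean plane: the zero locus of a polynomial of total degree 2. -/
def IsConic2 (S : Set EPt) : Prop :=
  ∃ c : Fin 6 → ℝ, ¬(c 0 = 0 ∧ c 1 = 0 ∧ c 2 = 0) ∧
    S = {p : EPt | c 0 * p 0 ^ 2 + c 1 * p 0 * p 1 + c 2 * p 1 ^ 2
          + c 3 * p 0 + c 4 * p 1 + c 5 = 0}

/-- Twice the signed area of the triangle `PQR`. -/
def signedArea (P Q R : EPt) : ℝ :=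
  (Q 0 - P 0) * (R 1 - P 1) - (Q 1 - P 1) * (R 0 - P 0)

theorem dist_sq_eq_coords (P Q : EPt) :
    dist P Q ^ 2 = (P 0 - Q 0) ^ 2 + (P 1 - Q 1) ^ 2 := by
  rw [EuclideanSpace.dist_sq_eq, Fin.sum_univ_two, Real.dist_eq, Real.dist_eq, sq_abs, sq_abs]

theorem inner_eq_coords (P Q : EPt) : ⟪P, Q⟫ = P 0 * Q 0 + P 1 * Q 1 := by
  simp [PiLp.inner_apply, Fin.sum_univ_two, mul_comm]

theorem Collinear.signedArea_eq_zero {P Q R : EPt} (h : Collinear ℝ {P, Q, R}) :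
    signedArea P Q R = 0 := by
  obtain ⟨v, hv⟩ := (collinear_iff_of_mem (p₀ := P) (by simp)).1 h
  obtain ⟨q, rfl⟩ := hv Q (by simp)
  obtain ⟨r, rfl⟩ := hv R (by simp)
  simp [signedArea]
  ring

theorem AffineIndependent.signedArea_ne_zero {P Q R : EPt}
    (h : AffineIndependent ℝ ![P, Q, R]) : signedArea P Q R ≠ 0 := by
  intro h0
  rw [affineIndependent_iff_not_collinear_set] at h
  apply h
  rw [collinear_iff_of_mem (p₀ := P) (by simp)]
  unfold signedArea at h0
  by_cases hQ : Q = P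
  · refine ⟨R - P, ?_⟩
    rintro p (rfl | rfl | rfl)
    · exact ⟨0, by simp⟩
    · exact ⟨0, by simp [hQ]⟩
    · exact ⟨1, by simp⟩
  · have hd : dist Q P ^ 2 ≠ 0 := pow_ne_zero _ (dist_ne_zero.2 hQ)
    rw [dist_sq_eq_coords] at hd
    refine ⟨Q - P, ?_⟩
    rintro p (rfl | rfl | rfl)
    · exact ⟨0, by simp⟩
    · exact ⟨1, by simp⟩
    · refine ⟨((Q 0 - P 0) * (p 0 - P 0) + (Q 1 - P 1) * (p 1 - P 1)) /
        ((Q 0 - P 0) ^ 2 + (Q 1 - P 1) ^ 2), ?_⟩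
      ext i
      fin_cases i
      · simp
        field_simp
        linear_combination -(Q 1 - P 1) * h0
      · simp
        field_simp
        linear_combination (Q 0 - P 0) * h0

theorem dist_mul_coord_of_dist_add {P Q R : EPt} (h : dist P R + dist Q R = dist P Q)
    (i : Fin 2) : dist P Q * R i = dist Q R * P i + dist P R * Q i := by
  rw [dist_comm Q R] at *
  obtain ⟨t, ⟨ht0, ht1⟩, rfl⟩ := dist_add_dist_eq_iff.1 h
  rw [dist_left_lineMap, dist_lineMap_right, Real.norm_of_nonneg ht0,
    Real.norm_of_nonneg (sub_nonneg.2 ht1)]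
  simp [AffineMap.lineMap_apply]
  ring

/-- The areas cut off by a point on the cevian through a point of the opposite side. -/
theorem mul_signedArea_of_cevian {A B C X P : EPt} {v w : ℝ}
    (hX : ∀ i, (v + w) * X i = w * B i + v * C i) (hP : Collinear ℝ {A, X, P}) :
    v * signedArea A P C = w * signedArea A B P := by
  have h := hP.signedArea_eq_zero
  unfold signedArea at *
  linear_combination (-(v + w)) * h + (P 1 - A 1) * hX 0 - (P 0 - A 0) * hX 1

/-- A vector orthogonal to two sides of a nondegenerate triangle vanishes. -/
theorem coords_eq_zero_of_inner_sides {A B C : EPt} (hD : signedArea A B C ≠ 0) {p q : ℝ}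
    (h₁ : p * (C 0 - B 0) + q * (C 1 - B 1) = 0)
    (h₂ : p * (A 0 - C 0) + q * (A 1 - C 1) = 0) : p = 0 ∧ q = 0 := by
  constructor <;> apply (mul_eq_zero.1 (?_ : signedArea A B C * _ = 0)).resolve_left hD <;>
    unfold signedArea
  · linear_combination (A 1 - C 1) * h₁ - (C 1 - B 1) * h₂
  · linear_combination (-(A 0 - C 0)) * h₁ + (C 0 - B 0) * h₂

/-- Perpendicularity of the incenter's projection onto a side, cleared of denominators. -/
theorem incenter_inner_side {A B C X I : EPt} {u v w : ℝ} (hvw : v + w ≠ 0)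
    (ha : dist B C = v + w) (hb : dist C A = w + u) (hc : dist A B = u + v)
    (hX : ∀ i, (v + w) * X i = w * B i + v * C i) (hI : ⟪X - I, C - B⟫ = 0) :
    (2 * (u + v + w) * I 0 - ((v + w) * A 0 + (w + u) * B 0 + (u + v) * C 0)) * (C 0 - B 0) +
    (2 * (u + v + w) * I 1 - ((v + w) * A 1 + (w + u) * B 1 + (u + v) * C 1)) * (C 1 - B 1)
      = 0 := by
  have ha' := dist_sq_eq_coords B C
  have hb' := dist_sq_eq_coords C A
  have hc' := dist_sq_eq_coords A B
  rw [ha] at ha'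
  rw [hb] at hb'
  rw [hc] at hc'
  rw [inner_eq_coords] at hI
  simp only [PiLp.sub_apply] at hI
  apply (mul_eq_zero.1 (?_ : (v + w) * _ = 0)).resolve_left hvw
  have h₁ : 2 * ((B 0 - A 0) * (C 0 - B 0) + (B 1 - A 1) * (C 1 - B 1)) =
      (w + u) ^ 2 - (u + v) ^ 2 - (v + w) ^ 2 := by
    linear_combination ha' - hb' + hc'
  have h₂ : 2 * ((C 0 - A 0) * (C 0 - B 0) + (C 1 - A 1) * (C 1 - B 1)) =
      (v + w) ^ 2 + (w + u) ^ 2 - (u + v) ^ 2 := by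
    linear_combination -ha' - hb' + hc'
  linear_combination (-2 * (u + v + w) * (v + w)) * hI
    + 2 * (u + v + w) * (C 0 - B 0) * hX 0 + 2 * (u + v + w) * (C 1 - B 1) * hX 1
    - ((v + w) * (w + u) - 2 * (u + v + w) * w) / 2 * h₁
    - ((v + w) * (u + v) - 2 * (u + v + w) * v) / 2 * h₂

/-- The left-hand side of the barycentric equation of the Feuerbach hyperbola of a triangle
with tangent lengths `u`, `v`, `w`. -/
def feuerbachForm (u v w x y z : ℝ) : ℝ :=
  (w ^ 2 - v ^ 2) * u * (y * z) + (u ^ 2 - w ^ 2) * v * (z * x) + (v ^ 2 - u ^ 2) * w * (x * y)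

/-- The Feuerbach hyperbola of `ABC`, written in the areal coordinates of a point. -/
def feuerbachConic (A B C : EPt) (u v w : ℝ) : Set EPt :=
  {P | feuerbachForm u v w (signedArea P B C) (signedArea A P C) (signedArea A B P) = 0}

theorem isConic2_feuerbachConic {A B C : EPt} {u v w : ℝ} (hD : signedArea A B C ≠ 0)
    (hu : (w ^ 2 - v ^ 2) * u ≠ 0) : IsConic2 (feuerbachConic A B C u v w) := by
  set k := (w ^ 2 - v ^ 2) * u with hk
  set l := (u ^ 2 - w ^ 2) * v with hl
  set m := (v ^ 2 - u ^ 2) * w with hm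
  let x₁ := B 1 - C 1
  let x₂ := C 0 - B 0
  let x₃ := B 0 * C 1 - B 1 * C 0
  let y₁ := C 1 - A 1
  let y₂ := A 0 - C 0
  let y₃ := C 0 * A 1 - C 1 * A 0
  let z₁ := A 1 - B 1
  let z₂ := B 0 - A 0
  let z₃ := A 0 * B 1 - A 1 * B 0
  refine ⟨![k * (y₁ * z₁) + l * (z₁ * x₁) + m * (x₁ * y₁),
    k * (y₁ * z₂ + y₂ * z₁) + l * (z₁ * x₂ + z₂ * x₁) + m * (x₁ * y₂ + x₂ * y₁),
    k * (y₂ * z₂) + l * (z₂ * x₂) + m * (x₂ * y₂),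
    k * (y₁ * z₃ + y₃ * z₁) + l * (z₁ * x₃ + z₃ * x₁) + m * (x₁ * y₃ + x₃ * y₁),
    k * (y₂ * z₃ + y₃ * z₂) + l * (z₂ * x₃ + z₃ * x₂) + m * (x₂ * y₃ + x₃ * y₂),
    k * (y₃ * z₃) + l * (z₃ * x₃) + m * (x₃ * y₃)], ?_, ?_⟩
  · rintro ⟨h₀, h₁, h₂⟩
    simp only [Matrix.cons_val] at h₀ h₁ h₂
    apply mul_ne_zero hu (pow_ne_zero 2 hD)
    -- evaluate the quadratic part on the vector `C - B`
    simp only [x₁, x₂, y₁, y₂, z₁, z₂] at h₀ h₁ h₂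
    unfold signedArea
    linear_combination (-(C 0 - B 0) ^ 2) * h₀ - (C 0 - B 0) * (C 1 - B 1) * h₁
      - (C 1 - B 1) ^ 2 * h₂
  · ext P
    simp only [feuerbachConic, feuerbachForm, Set.mem_ofPred_eq, ← hk, ← hl, ← hm,
      Matrix.cons_val]
    apply Eq.congr_left
    simp only [x₁, x₂, x₃, y₁, y₂, y₃, z₁, z₂, z₃, signedArea]
    ring

theorem vertices_mem_feuerbachConic (A B C : EPt) (u v w : ℝ) :
    A ∈ feuerbachConic A B C u v w ∧ B ∈ feuerbachConic A B C u v w ∧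
      C ∈ feuerbachConic A B C u v w := by
  refine ⟨?_, ?_, ?_⟩ <;>
    simp only [feuerbachConic, feuerbachForm, signedArea, Set.mem_ofPred_eq] <;>
    ring

theorem incenter_mem_feuerbachConic {A B C I : EPt} {u v w : ℝ} (hs : u + v + w ≠ 0)
    (hI : ∀ i, 2 * (u + v + w) * I i = (v + w) * A i + (w + u) * B i + (u + v) * C i) :
    I ∈ feuerbachConic A B C u v w := by
  have hx : 2 * (u + v + w) * signedArea I B C = (v + w) * signedArea A B C := by
    unfold signedArea
    linear_combination (B 1 - C 1) * hI 0 + (C 0 - B 0) * hI 1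
  have hy : 2 * (u + v + w) * signedArea A I C = (w + u) * signedArea A B C := by
    unfold signedArea
    linear_combination (C 1 - A 1) * hI 0 + (A 0 - C 0) * hI 1
  have hz : 2 * (u + v + w) * signedArea A B I = (u + v) * signedArea A B C := by
    unfold signedArea
    linear_combination (A 1 - B 1) * hI 0 + (B 0 - A 0) * hI 1
  have h : (2 * (u + v + w)) ^ 2 *
      feuerbachForm u v w (signedArea I B C) (signedArea A I C) (signedArea A B I) =
      feuerbachForm u v w (2 * (u + v + w) * signedArea I B C)
        (2 * (u + v + w) * signedArea A I C) (2 * (u + v + w) * signedArea A B I) := by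
    unfold feuerbachForm
    ring
  rw [hx, hy, hz] at h
  refine (mul_eq_zero.1 (h.trans ?_)).resolve_left (by positivity)
  unfold feuerbachForm
  ring

theorem signedArea_sq_eq_heron {A B C : EPt} {u v w : ℝ}
    (ha : dist B C = v + w) (hb : dist C A = w + u) (hc : dist A B = u + v) :
    signedArea A B C ^ 2 = 4 * (u + v + w) * u * v * w := by
  have ha' := dist_sq_eq_coords B C
  have hb' := dist_sq_eq_coords C A
  have hc' := dist_sq_eq_coords A B
  rw [ha] at ha'
  rw [hb] at hb'
  rw [hc] at hc'
  have hSA : (B 0 - A 0) * (C 0 - A 0) + (B 1 - A 1) * (C 1 - A 1) = u * (u + v + w) - v * w := by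
    linear_combination (ha' - hb' - hc') / 2
  have h : signedArea A B C ^ 2 =
      ((A 0 - B 0) ^ 2 + (A 1 - B 1) ^ 2) * ((C 0 - A 0) ^ 2 + (C 1 - A 1) ^ 2) -
      ((B 0 - A 0) * (C 0 - A 0) + (B 1 - A 1) * (C 1 - A 1)) ^ 2 := by
    unfold signedArea
    ring
  rw [h, hSA, ← hb', ← hc']
  ring

theorem orthocenter_mem_feuerbachConic {A B C H : EPt} {u v w : ℝ}
    (hD : signedArea A B C ≠ 0)
    (ha : dist B C = v + w) (hb : dist C A = w + u) (hc : dist A B = u + v)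
    (h₁ : ⟪H - A, C - B⟫ = 0) (h₂ : ⟪H - B, C - A⟫ = 0) :
    H ∈ feuerbachConic A B C u v w := by
  have ha' := dist_sq_eq_coords B C
  have hb' := dist_sq_eq_coords C A
  have hc' := dist_sq_eq_coords A B
  rw [ha] at ha'
  rw [hb] at hb'
  rw [hc] at hc'
  rw [inner_eq_coords] at h₁ h₂
  simp only [PiLp.sub_apply] at h₁ h₂
  have hSA : (B 0 - A 0) * (C 0 - A 0) + (B 1 - A 1) * (C 1 - A 1) = u * (u + v + w) - v * w := by
    linear_combination (ha' - hb' - hc') / 2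
  have hSB : (A 0 - B 0) * (C 0 - B 0) + (A 1 - B 1) * (C 1 - B 1) = v * (u + v + w) - w * u := by
    linear_combination (hb' - ha' - hc') / 2
  have hSC : (A 0 - C 0) * (B 0 - C 0) + (A 1 - C 1) * (B 1 - C 1) = w * (u + v + w) - u * v := by
    linear_combination (hc' - ha' - hb') / 2
  have hH₀ : signedArea A B C * (H 0 - A 0) = (C 1 - B 1) * (u * (u + v + w) - v * w) := by
    rw [← hSA]
    unfold signedArea
    linear_combination (A 1 - C 1) * h₁ + (C 1 - B 1) * h₂
  have hH₁ : signedArea A B C * (H 1 - A 1) = (B 0 - C 0) * (u * (u + v + w) - v * w) := by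
    rw [← hSA]
    unfold signedArea
    linear_combination (C 0 - A 0) * h₁ + (B 0 - C 0) * h₂
  have hy : signedArea A B C * signedArea A H C =
      (w * (u + v + w) - u * v) * (u * (u + v + w) - v * w) := by
    rw [← hSC]
    unfold signedArea at *
    linear_combination (C 1 - A 1) * hH₀ + (A 0 - C 0) * hH₁
  have hz : signedArea A B C * signedArea A B H =
      (u * (u + v + w) - v * w) * (v * (u + v + w) - w * u) := by
    rw [← hSB]
    unfold signedArea at *
    linear_combination (A 1 - B 1) * hH₀ + (B 0 - A 0) * hH₁
  have hx : signedArea A B C * signedArea H B C =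
      (v * (u + v + w) - w * u) * (w * (u + v + w) - u * v) := by
    have hsum : signedArea H B C = signedArea A B C - signedArea A H C - signedArea A B H := by
      unfold signedArea
      ring
    rw [hsum]
    linear_combination signedArea_sq_eq_heron ha hb hc - hy - hz
  have h : signedArea A B C ^ 2 *
      feuerbachForm u v w (signedArea H B C) (signedArea A H C) (signedArea A B H) =
      feuerbachForm u v w (signedArea A B C * signedArea H B C)
        (signedArea A B C * signedArea A H C) (signedArea A B C * signedArea A B H) := by
    unfold feuerbachForm
    ring
  rw [hx, hy, hz] at h
  refine (mul_eq_zero.1 (h.trans ?_)).resolve_left (pow_ne_zero 2 hD)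
  unfold feuerbachForm
  ring

theorem signedArea_rotate (P Q R : EPt) : signedArea P Q R = signedArea Q R P := by
  unfold signedArea
  ring

theorem gergonne_form_eq_zero {u v w x y z : ℝ} (hu : u ≠ 0) (hv : v ≠ 0)
    (h₁ : v * y = w * z) (h₂ : w * z = u * x) :
    feuerbachForm u v w x y z = 0 ∧ feuerbachForm u v w (y + z) (z + x) (x + y) = 0 := by
  obtain rfl : y = w * z / v := by field_simp; linarith
  obtain rfl : x = w * z / u := by field_simp; linarith
  unfold feuerbachForm
  constructor <;> field_simp <;> ring

theorem nagel_form_eq_zero {u v w x y z : ℝ} (hw : w ≠ 0)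
    (h₁ : w * y = v * z) (h₂ : u * z = w * x) : feuerbachForm u v w x y z = 0 := by
  obtain rfl : y = v * z / w := by field_simp; linarith
  obtain rfl : x = u * z / w := by field_simp; linarith
  unfold feuerbachForm
  field_simp
  ring

theorem feuerbach_hyperbola_through_orthocenter_nagel_mittenpunkt
    (A B C : EPt)
    (hABC : AffineIndependent ℝ ![A, B, C])
    (hsc1 : dist B C ≠ dist C A) (hsc2 : dist C A ≠ dist A B) (hsc3 : dist B C ≠ dist A B)
    (s : ℝ) (hs : s = (dist B C + dist C A + dist A B) / 2)
    (X Y W : EPt)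
    (hX : Collinear ℝ {B, C, X} ∧ dist B X = s - dist C A ∧ dist C X = s - dist A B)
    (hY : Collinear ℝ {C, A, Y} ∧ dist C Y = s - dist A B ∧ dist A Y = s - dist B C)
    (hW : Collinear ℝ {A, B, W} ∧ dist A W = s - dist B C ∧ dist B W = s - dist C A)
    (I₀ : EPt)
    (hI₀ : ⟪X - I₀, C - B⟫ = 0 ∧ ⟪Y - I₀, A - C⟫ = 0 ∧ ⟪W - I₀, B - A⟫ = 0)
    (Ge : EPt)
    (hGe : Collinear ℝ {A, X, Ge} ∧ Collinear ℝ {B, Y, Ge} ∧ Collinear ℝ {C, W, Ge})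
    (H₀ : EPt)
    (hH₀ : ⟪H₀ - A, C - B⟫ = 0 ∧ ⟪H₀ - B, C - A⟫ = 0)
    (XA YB WC : EPt)
    (hXA : Collinear ℝ {B, C, XA} ∧ dist B XA = s - dist A B ∧ dist C XA = s - dist C A)
    (hYB : Collinear ℝ {C, A, YB} ∧ dist C YB = s - dist B C ∧ dist A YB = s - dist A B)
    (hWC : Collinear ℝ {A, B, WC} ∧ dist A WC = s - dist C A ∧ dist B WC = s - dist B C)
    (Na : EPt)
    (hNa : Collinear ℝ {A, XA, Na} ∧ Collinear ℝ {B, YB, Na} ∧ Collinear ℝ {C, WC, Na})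
    (G Mp : EPt)
    (hG : G = (3⁻¹ : ℝ) • (A + B + C))
    (hMp : Mp = G + (-(1 / 2) : ℝ) • (Ge - G))
    (Feu : Set EPt)
    (hFeu : IsConic2 Feu)
    (hAF : A ∈ Feu) (hBF : B ∈ Feu) (hCF : C ∈ Feu) (hGeF : Ge ∈ Feu) (hIF : I₀ ∈ Feu)
    (huniq : ∀ S : Set EPt, IsConic2 S →
      A ∈ S → B ∈ S → C ∈ S → Ge ∈ S → I₀ ∈ S → S = Feu) :
    H₀ ∈ Feu ∧ Na ∈ Feu ∧ Mp ∈ Feu := by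
  obtain ⟨u, hu⟩ : ∃ u, u = s - dist B C := ⟨_, rfl⟩
  obtain ⟨v, hv⟩ : ∃ v, v = s - dist C A := ⟨_, rfl⟩
  obtain ⟨w, hw⟩ : ∃ w, w = s - dist A B := ⟨_, rfl⟩
  have ha : dist B C = v + w := by linarith
  have hb : dist C A = w + u := by linarith
  have hc : dist A B = u + v := by linarith
  have hu0 : 0 ≤ u := by rw [hu, ← hY.2.2]; exact dist_nonneg
  have hv0 : 0 ≤ v := by rw [hv, ← hX.2.1]; exact dist_nonneg
  have hw0 : 0 ≤ w := by rw [hw, ← hX.2.2]; exact dist_nonneg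
  have hD := hABC.signedArea_ne_zero
  have hpos : 4 * (u + v + w) * u * v * w ≠ 0 :=
    signedArea_sq_eq_heron ha hb hc ▸ pow_ne_zero 2 hD
  replace hu0 : 0 < u := hu0.lt_of_ne' (by rintro rfl; simp at hpos)
  replace hv0 : 0 < v := hv0.lt_of_ne' (by rintro rfl; simp at hpos)
  replace hw0 : 0 < w := hw0.lt_of_ne' (by rintro rfl; simp at hpos)
  have foot {P Q R : EPt} {p q : ℝ} (h : dist P Q = p + q) (hp : dist P R = p)
      (hq : dist Q R = q) (i : Fin 2) : (p + q) * R i = q * P i + p * Q i := by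
    have := dist_mul_coord_of_dist_add (P := P) (Q := Q) (R := R) (by rw [h, hp, hq]) i
    rwa [h, hp, hq] at this
  have hX' := foot ha (hX.2.1.trans hv.symm) (hX.2.2.trans hw.symm)
  have hY' := foot hb (hY.2.1.trans hw.symm) (hY.2.2.trans hu.symm)
  have hXA' := foot (ha.trans (add_comm _ _)) (hXA.2.1.trans hw.symm) (hXA.2.2.trans hv.symm)
  have hYB' := foot (hb.trans (add_comm _ _)) (hYB.2.1.trans hu.symm) (hYB.2.2.trans hw.symm)
  have hGe₁ := mul_signedArea_of_cevian hX' hGe.1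
  have hGe₂ := mul_signedArea_of_cevian hY' hGe.2.1
  rw [← signedArea_rotate A B, ← signedArea_rotate Ge B C] at hGe₂
  have hNa₁ := mul_signedArea_of_cevian hXA' hNa.1
  have hNa₂ := mul_signedArea_of_cevian hYB' hNa.2.1
  rw [← signedArea_rotate A B, ← signedArea_rotate Na B C] at hNa₂
  obtain ⟨hGe₀, hMp₀⟩ := gergonne_form_eq_zero hu0.ne' hv0.ne' hGe₁ hGe₂
  have hI₁ := incenter_inner_side (by positivity) ha hb hc hX' hI₀.1
  have hI₂ := incenter_inner_side (by positivity) hb hc ha hY' hI₀.2.1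
  obtain ⟨hI0, hI1⟩ := coords_eq_zero_of_inner_sides hD hI₁ (by linear_combination hI₂)
  have hI : I₀ ∈ feuerbachConic A B C u v w := by
    refine incenter_mem_feuerbachConic (by positivity) fun i => ?_
    fin_cases i
    · exact sub_eq_zero.1 hI0
    · exact sub_eq_zero.1 hI1
  have hk : (w ^ 2 - v ^ 2) * u ≠ 0 := by
    refine mul_ne_zero (sub_ne_zero.2 fun h => hsc2 ?_) hu0.ne'
    rw [hb, hc, (pow_left_inj₀ hw0.le hv0.le two_ne_zero).1 h, add_comm]
  obtain ⟨hA, hB, hC⟩ := vertices_mem_feuerbachConic A B C u v w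
  rw [← huniq _ (isConic2_feuerbachConic hD hk) hA hB hC hGe₀ hI]
  refine ⟨orthocenter_mem_feuerbachConic hD ha hb hc hH₀.1 hH₀.2,
    nagel_form_eq_zero hw0.ne' hNa₁ hNa₂, ?_⟩
  have hMp' (i : Fin 2) : Mp i = (A i + B i + C i - Ge i) / 2 := by
    rw [hMp, hG]
    simp
    ring
  refine Eq.trans ?_ (mul_eq_zero_of_right (1 / 4) hMp₀)
  simp only [feuerbachForm, signedArea, hMp']
  ring
end
end

section
/- Assume P does not lie on a median of ABC (a line joining a vertex to the midpoint of the opposite side). Then Q, D₀, λ(A) are collinear; Q, E₀, λ(B) are collinear; and Q, F₀, λ(C) are collinear. That is, Q is the perspector of the medial triangle D₀E₀F₀ and the triangle λ(A)λ(B)λ(C). -/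
noncomputable section

/-- Three points of the plane are collinear iff the determinant of their differences vanishes. -/
theorem collinear_iff_det_eq_zero (X Y Z : Pt) :
    Collinear ℝ {X, Y, Z} ↔
      (Y.1 - X.1) * (Z.2 - X.2) - (Y.2 - X.2) * (Z.1 - X.1) = 0 := by
  rw [collinear_iff_of_mem (p₀ := X) (by simp)]
  constructor
  · rintro ⟨v, hv⟩
    obtain ⟨r, hr⟩ := hv Y (by simp)
    obtain ⟨s, hs⟩ := hv Z (by simp)
    subst hr hs
    simp only [vadd_eq_add, Prod.fst_add, Prod.snd_add, Prod.smul_fst, Prod.smul_snd, smul_eq_mul]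
    ring
  · intro h
    by_cases hYX : Y = X
    · refine ⟨Z - X, ?_⟩
      rintro p (rfl | rfl | rfl)
      · exact ⟨0, by simp⟩
      · exact ⟨0, by simp [hYX]⟩
      · exact ⟨1, by simp⟩
    · refine ⟨Y - X, ?_⟩
      rintro p (rfl | rfl | rfl)
      · exact ⟨0, by simp⟩
      · exact ⟨1, by simp⟩
      · by_cases h1 : Y.1 - X.1 = 0
        · have h2 : Y.2 - X.2 ≠ 0 := fun h2 =>
            hYX (Prod.ext (sub_eq_zero.mp h1) (sub_eq_zero.mp h2))
          refine ⟨(p.2 - X.2) / (Y.2 - X.2), Prod.ext ?_ ?_⟩ <;>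
            simp only [vadd_eq_add, Prod.fst_add, Prod.snd_add, Prod.smul_fst, Prod.smul_snd,
              Prod.fst_sub, Prod.snd_sub, smul_eq_mul] <;> field_simp <;> linarith
        · refine ⟨(p.1 - X.1) / (Y.1 - X.1), Prod.ext ?_ ?_⟩ <;>
            simp only [vadd_eq_add, Prod.fst_add, Prod.snd_add, Prod.smul_fst, Prod.smul_snd,
              Prod.fst_sub, Prod.snd_sub, smul_eq_mul] <;> field_simp <;> linarith

/-- The trace on `BC` of the point with normalized barycentric coordinates `(x : y : z)`
is `(0 : y : z)`. -/
theorem smul_trace_eq {A B C P D : Pt} {x y z : ℝ} (hABC : ¬ Collinear ℝ {A, B, C})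
    (hsum : x + y + z = 1) (hP : P = x • A + y • B + z • C) (hyz : y + z ≠ 0)
    (hAD : Collinear ℝ {A, P, D}) (hBD : Collinear ℝ {B, C, D}) :
    (y + z) • D = y • B + z • C := by
  rw [collinear_iff_det_eq_zero] at hABC hAD hBD
  obtain rfl : x = 1 - y - z := by linarith
  subst hP
  obtain ⟨a, a'⟩ := A
  obtain ⟨b, b'⟩ := B
  obtain ⟨c, c'⟩ := C
  obtain ⟨d, d'⟩ := D
  simp only [Prod.fst_add, Prod.snd_add, Prod.smul_fst, Prod.smul_snd, smul_eq_mul] at *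
  have hne := mul_ne_zero hyz hABC
  refine Prod.ext ?_ ?_ <;>
    simp only [Prod.fst_add, Prod.snd_add, Prod.smul_fst, Prod.smul_snd, smul_eq_mul] <;>
    refine mul_left_cancel₀ hne ?_
  · linear_combination (y + z) * (c - b) * hAD -
      (y + z) * (y * (b - a) + z * (c - a)) * hBD
  · linear_combination (y + z) * (c' - b') * hAD -
      (y + z) * (y * (b' - a') + z * (c' - a')) * hBD

/-- The trace on `BC` of the isotomic conjugate of `(x : y : z)` is `(0 : z : y)`. -/
theorem smul_trace_eq_isotomic {A B C P' D₃ : Pt} {x y z : ℝ} (hABC : ¬ Collinear ℝ {A, B, C})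
    (hx : x ≠ 0) (hyz : y + z ≠ 0) (hs : x * y + y * z + z * x ≠ 0)
    (hP' : P' = (y * z / (x * y + y * z + z * x)) • A
        + (x * z / (x * y + y * z + z * x)) • B
        + (x * y / (x * y + y * z + z * x)) • C)
    (hAD : Collinear ℝ {A, P', D₃}) (hBD : Collinear ℝ {B, C, D₃}) :
    (y + z) • D₃ = z • B + y • C := by
  have hvw : x * z / (x * y + y * z + z * x) + x * y / (x * y + y * z + z * x) =
      x / (x * y + y * z + z * x) * (y + z) := by ring
  have hne : x / (x * y + y * z + z * x) ≠ 0 := div_ne_zero hx hs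
  have h := smul_trace_eq hABC (by rw [← add_div, ← add_div, div_eq_one_iff_eq hs]; ring) hP'
    (by rw [hvw]; exact mul_ne_zero hne hyz) hAD hBD
  refine smul_right_injective Pt hne ?_
  simp only [smul_add, smul_smul]
  rw [← hvw, h]
  congr 2 <;> ring

/-- Affine maps preserve affine combinations of three points. -/
theorem AffineEquiv.map_combination_three (T : Pt ≃ᵃ[ℝ] Pt) (A B C : Pt) {a b c : ℝ}
    (h : a + b + c = 1) :
    T (a • A + b • B + c • C) = a • T A + b • T B + c • T C := by
  obtain rfl : a = 1 - b - c := by linarith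
  have h₁ : (1 - b - c) • A + b • B + c • C = (b • (B - A) + c • (C - A)) +ᵥ A := by
    rw [vadd_eq_add]; module
  have hB : T.linear (B - A) = T B - T A := T.toAffineMap.linearMap_vsub B A
  have hC : T.linear (C - A) = T C - T A := T.toAffineMap.linearMap_vsub C A
  rw [h₁, T.map_vadd, map_add, map_smul, map_smul, hB, hC, vadd_eq_add]
  module

/-- `Q`, the midpoint of `BC` and the image of `A` under `T' ∘ T⁻¹` are collinear. -/
theorem collinear_midpoint_apply_symm {A B C Q D E F D₃ E₃ F₃ : Pt} {x y z : ℝ}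
    (hx : x ≠ 0)
    (hQ : (2 * (x * y + y * z + z * x)) • Q =
      (x * (y + z)) • A + (y * (z + x)) • B + (z * (x + y)) • C)
    (hD : (y + z) • D = y • B + z • C)
    (hE : (z + x) • E = z • C + x • A)
    (hF : (x + y) • F = x • A + y • B)
    (hD₃ : (y + z) • D₃ = z • B + y • C)
    (hE₃ : (z + x) • E₃ = x • C + z • A)
    (hF₃ : (x + y) • F₃ = y • A + x • B)
    (T T' : Pt ≃ᵃ[ℝ] Pt) (hT : T A = D ∧ T B = E ∧ T C = F)
    (hT' : T' A = D₃ ∧ T' B = E₃ ∧ T' C = F₃) :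
    Collinear ℝ {Q, midpoint ℝ B C, T' (T.symm A)} := by
  obtain ⟨rfl, rfl, rfl⟩ := hT
  obtain ⟨rfl, rfl, rfl⟩ := hT'
  have hw : -(y + z) / (2 * x) + (z + x) / (2 * x) + (x + y) / (2 * x) = 1 := by
    field_simp; ring
  have hsymm : T.symm A =
      (-(y + z) / (2 * x)) • A + ((z + x) / (2 * x)) • B + ((x + y) / (2 * x)) • C := by
    rw [AffineEquiv.symm_apply_eq, T.map_combination_three A B C hw]
    have hk : (2 * x) • A = -((y + z) • T A) + (z + x) • T B + (x + y) • T C := by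
      rw [hD, hE, hF]; module
    refine smul_right_injective Pt (mul_ne_zero two_ne_zero hx) ?_
    simp only [hk]
    match_scalars <;> field_simp
  have himage : (2 * x) • T' (T.symm A) = (y + z) • A + (x - z) • B + (x - y) • C := by
    rw [hsymm, T'.map_combination_three A B C hw]
    have hk : (y + z) • A + (x - z) • B + (x - y) • C =
        -((y + z) • T' A) + (z + x) • T' B + (x + y) • T' C := by
      rw [hD₃, hE₃, hF₃]; module
    rw [hk]
    match_scalars <;> field_simp
  have hline : T' (T.symm A) =
      AffineMap.lineMap (midpoint ℝ B C) Q ((x * y + y * z + z * x) / x ^ 2) := by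
    refine smul_right_injective Pt (mul_ne_zero two_ne_zero (pow_ne_zero 2 hx)) ?_
    have h₁ : (2 * x ^ 2) • T' (T.symm A) = x • ((2 * x) • T' (T.symm A)) := by module
    have h₂ : (2 * x ^ 2) • AffineMap.lineMap (midpoint ℝ B C) Q
        ((x * y + y * z + z * x) / x ^ 2) =
        (2 * (x * y + y * z + z * x)) • Q +
          (x ^ 2 - (x * y + y * z + z * x)) • (B + C) := by
      rw [AffineMap.lineMap_apply, midpoint_eq_smul_add, vsub_eq_sub, vadd_eq_add, invOf_eq_inv]
      match_scalars <;> field_simp <;> ring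
    simp only [h₁, h₂, himage, hQ]
    module
  rw [hline, Set.insert_comm, Set.pair_comm Q, Set.insert_comm]
  exact collinear_insert_of_mem_affineSpan_pair (AffineMap.lineMap_mem_affineSpan_pair _ _ _)

theorem Q_perspector_of_medial_and_lambda_triangle
    (A B C P P' Q Q' D E F D₃ E₃ F₃ : Pt) (x y z : ℝ)
    (hABC : AffineIndependent ℝ ![A, B, C])
    (hsum : x + y + z = 1)
    (hPco : P = x • A + y • B + z • C)
    (hx0 : x ≠ 0) (hy0 : y ≠ 0) (hz0 : z ≠ 0)
    (hx1 : x ≠ 1) (hy1 : y ≠ 1) (hz1 : z ≠ 1)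
    (hst : x * y + y * z + z * x ≠ 0)
    (hP' : P' = (y * z / (x * y + y * z + z * x)) • A
        + (x * z / (x * y + y * z + z * x)) • B
        + (x * y / (x * y + y * z + z * x)) • C)
    (hQ : Q = homoth (cent A B C) (-(1 / 2)) P')
    (hQ' : Q' = homoth (cent A B C) (-(1 / 2)) P)
    (hD : Collinear ℝ {A, P, D} ∧ Collinear ℝ {B, C, D})
    (hE : Collinear ℝ {B, P, E} ∧ Collinear ℝ {A, C, E})
    (hF : Collinear ℝ {C, P, F} ∧ Collinear ℝ {A, B, F})
    (hD₃ : Collinear ℝ {A, P', D₃} ∧ Collinear ℝ {B, C, D₃})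
    (hE₃ : Collinear ℝ {B, P', E₃} ∧ Collinear ℝ {A, C, E₃})
    (hF₃ : Collinear ℝ {C, P', F₃} ∧ Collinear ℝ {A, B, F₃})
    (hxy : x ≠ y) (hyz : y ≠ z) (hxz : x ≠ z)
    (TP : Pt ≃ᵃ[ℝ] Pt) (hTP : TP A = D ∧ TP B = E ∧ TP C = F)
    (TP' : Pt ≃ᵃ[ℝ] Pt) (hTP' : TP' A = D₃ ∧ TP' B = E₃ ∧ TP' C = F₃) :
    Collinear ℝ {Q, midpoint ℝ B C, TP' (TP.symm A)} ∧
    Collinear ℝ {Q, midpoint ℝ C A, TP' (TP.symm B)} ∧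
    Collinear ℝ {Q, midpoint ℝ A B, TP' (TP.symm C)} := by
  have hnc : ¬ Collinear ℝ {A, B, C} := affineIndependent_iff_not_collinear_set.mp hABC
  have hperm : ∀ X Y Z : Pt, ({Y, Z, X} : Set Pt) = {X, Y, Z} := fun X Y Z => by
    rw [Set.pair_comm Z X, Set.insert_comm]
  have hncB : ¬ Collinear ℝ {B, C, A} := by rwa [hperm]
  have hncC : ¬ Collinear ℝ {C, A, B} := by rwa [hperm, hperm]
  have hyz0 : y + z ≠ 0 := fun h => hx1 (by linarith)
  have hzx0 : z + x ≠ 0 := fun h => hy1 (by linarith)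
  have hxy0 : x + y ≠ 0 := fun h => hz1 (by linarith)
  have hEs := hE.2
  have hE₃s := hE₃.2
  rw [Set.insert_comm] at hEs hE₃s
  have hD' := smul_trace_eq hnc hsum hPco hyz0 hD.1 hD.2
  have hE' := smul_trace_eq (x := y) hncB (by linarith) (by rw [hPco]; abel) hzx0 hE.1 hEs
  have hF' := smul_trace_eq (x := z) hncC (by linarith) (by rw [hPco]; abel) hxy0 hF.1 hF.2
  have hD₃' := smul_trace_eq_isotomic hnc hx0 hyz0 hst hP' hD₃.1 hD₃.2
  have hE₃' := smul_trace_eq_isotomic (x := y) (y := z) (z := x) hncB hy0 hzx0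
    (by convert hst using 1; ring) (by rw [hP']; ring_nf) hE₃.1 hE₃s
  have hF₃' := smul_trace_eq_isotomic (x := z) (y := x) (z := y) hncC hz0 hxy0
    (by convert hst using 1; ring) (by rw [hP']; ring_nf) hF₃.1 hF₃.2
  have hQs : (2 * (x * y + y * z + z * x)) • Q =
      (x * (y + z)) • A + (y * (z + x)) • B + (z * (x + y)) • C := by
    have hsP' : (x * y + y * z + z * x) • P' = (y * z) • A + (x * z) • B + (x * y) • C := by
      rw [hP']
      simp only [smul_add, smul_smul, mul_div_cancel₀ _ hst]
    have hsQ : (2 * (x * y + y * z + z * x)) • Q =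
        (x * y + y * z + z * x) • (A + B + C) - (x * y + y * z + z * x) • P' := by
      rw [hQ, homoth, cent]
      module
    rw [hsQ, hsP']
    module
  refine ⟨?_, ?_, ?_⟩
  · exact collinear_midpoint_apply_symm hx0 hQs hD' hE' hF' hD₃' hE₃' hF₃' TP TP' hTP hTP'
  · refine collinear_midpoint_apply_symm hy0 ?_ hE' hF' hD' hE₃' hF₃' hD₃' TP TP'
      ⟨hTP.2.1, hTP.2.2, hTP.1⟩ ⟨hTP'.2.1, hTP'.2.2, hTP'.1⟩
    convert hQs using 1
    · congr 1; ring
    · abel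
  · refine collinear_midpoint_apply_symm hz0 ?_ hF' hD' hE' hF₃' hD₃' hE₃' TP TP'
      ⟨hTP.2.2, hTP.1, hTP.2.1⟩ ⟨hTP'.2.2, hTP'.1, hTP'.2.1⟩
    convert hQs using 1
    · congr 1; ring
    · abel
end
end

section
/- Assume P does not lie on a median of ABC (a line joining a vertex to the midpoint of the opposite side). Let H̃ = T_{P′}⁻¹(Q). Then the points T_{P′}⁻¹(A), D₃, H̃ are collinear; the points T_{P′}⁻¹(B), E₃, H̃ are collinear; and the points T_{P′}⁻¹(C), F₃, H̃ are collinear. That is, H̃ is the perspector of the anticevian triangle T_{P′}⁻¹(A)T_{P′}⁻¹(B)T_{P′}⁻¹(C) of Q and the cevian triangle D₃E₃F₃ of P′. -/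
noncomputable section

/-- Affine maps preserve collinearity. -/
theorem collinear_image_affineMap {k V W : Type*} [DivisionRing k] [AddCommGroup V] [Module k V]
    [AddCommGroup W] [Module k W] {s : Set V} (hs : Collinear k s) (f : V →ᵃ[k] W) :
    Collinear k (f '' s) := by
  obtain ⟨p, v, h⟩ := (collinear_iff_exists_forall_eq_smul_vadd s).1 hs
  refine (collinear_iff_exists_forall_eq_smul_vadd _).2 ⟨f p, f.linear v, ?_⟩
  rintro _ ⟨q, hq, rfl⟩
  obtain ⟨r, rfl⟩ := h q hq
  exact ⟨r, by rw [AffineMap.map_vadd, map_smul]⟩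

/-- Three points of the plane are collinear iff the determinant of their differences vanishes. -/
theorem collinear_triple_iff_det_s8 (p q r : Pt) :
    Collinear ℝ {p, q, r} ↔ (q.1 - p.1) * (r.2 - p.2) - (q.2 - p.2) * (r.1 - p.1) = 0 := by
  rw [collinear_iff_of_mem (p₀ := p) (by simp)]
  constructor
  · rintro ⟨v, hv⟩
    obtain ⟨s, rfl⟩ := hv q (by simp)
    obtain ⟨t, rfl⟩ := hv r (by simp)
    simp only [vadd_eq_add, Prod.fst_add, Prod.snd_add, Prod.smul_fst, Prod.smul_snd, smul_eq_mul]
    ring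
  · intro h
    by_cases hq : q = p
    · refine ⟨r - p, ?_⟩
      rintro w (rfl | rfl | rfl)
      · exact ⟨0, by simp⟩
      · exact ⟨0, by simp [hq]⟩
      · exact ⟨1, by simp⟩
    · refine ⟨q - p, ?_⟩
      rintro w (rfl | rfl | rfl)
      · exact ⟨0, by simp⟩
      · exact ⟨1, by simp⟩
      · by_cases h1 : q.1 - p.1 = 0
        · have h2 : q.2 - p.2 ≠ 0 := fun h2 => hq (Prod.ext (by linarith) (by linarith))
          refine ⟨(w.2 - p.2) / (q.2 - p.2), Prod.ext ?_ ?_⟩ <;>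
            simp only [vadd_eq_add, Prod.fst_add, Prod.snd_add, Prod.smul_fst, Prod.smul_snd,
              Prod.fst_sub, Prod.snd_sub, smul_eq_mul] <;> field_simp <;> linarith
        · refine ⟨(w.1 - p.1) / (q.1 - p.1), Prod.ext ?_ ?_⟩ <;>
            simp only [vadd_eq_add, Prod.fst_add, Prod.snd_add, Prod.smul_fst, Prod.smul_snd,
              Prod.fst_sub, Prod.snd_sub, smul_eq_mul] <;> field_simp <;> linarith

/-- The trace on `BC` of the cevian through `A` of a point with barycentric weights `(a : b : c)`
has weights `(0 : b : c)`. -/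
theorem smul_trace_eq_s8 {A B C X D : Pt} {a b c : ℝ} (hABC : ¬Collinear ℝ {A, B, C})
    (hX : (a + b + c) • X = a • A + b • B + c • C)
    (hAXD : Collinear ℝ {A, X, D}) (hBCD : Collinear ℝ {B, C, D}) :
    (b + c) • D = b • B + c • C := by
  rw [collinear_triple_iff_det_s8] at hABC hAXD hBCD
  have hX₁ := congrArg Prod.fst hX
  have hX₂ := congrArg Prod.snd hX
  simp only [Prod.fst_add, Prod.snd_add, Prod.smul_fst, Prod.smul_snd, smul_eq_mul] at hX₁ hX₂
  have hcross : (b * (B.1 - A.1) + c * (C.1 - A.1)) * (D.2 - A.2)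
      - (b * (B.2 - A.2) + c * (C.2 - A.2)) * (D.1 - A.1) = 0 := by
    linear_combination (a + b + c) * hAXD - (D.2 - A.2) * hX₁ + (D.1 - A.1) * hX₂
  refine Prod.ext (mul_left_cancel₀ hABC ?_) (mul_left_cancel₀ hABC ?_) <;>
    simp only [Prod.fst_add, Prod.snd_add, Prod.smul_fst, Prod.smul_snd, smul_eq_mul]
  · linear_combination (C.1 - B.1) * hcross -
      (b * (B.1 - A.1) + c * (C.1 - A.1)) * hBCD
  · linear_combination (C.2 - B.2) * hcross -
      (b * (B.2 - A.2) + c * (C.2 - A.2)) * hBCD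

/-- Let `D`, `E`, `F` be the traces of the point with barycentric weights `(a : b : c)`, let `Q`
be the complement of that point, and let `T` be an affine equivalence sending `B`, `C` to `E`, `F`.
Then `T⁻¹ A`, `D`, `T⁻¹ Q` are collinear. -/
theorem collinear_symm_trace_symm {V : Type*} [AddCommGroup V] [Module ℝ V]
    {A B C D E F Q : V} {a b c : ℝ}
    (hs : a + b + c ≠ 0) (hbc : b + c ≠ 0) (hca : c + a ≠ 0) (hab : a + b ≠ 0)
    (hD : (b + c) • D = b • B + c • C) (hE : (c + a) • E = c • C + a • A)
    (hF : (a + b) • F = a • A + b • B)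
    (hQ : (2 * (a + b + c)) • Q = (b + c) • A + (c + a) • B + (a + b) • C)
    (T : V ≃ᵃ[ℝ] V) (hB : T B = E) (hC : T C = F) :
    Collinear ℝ {T.symm A, D, T.symm Q} := by
  have hD' : D = AffineMap.lineMap B C (c / (b + c)) := by
    rw [← (smul_right_injective V hbc).eq_iff, hD, AffineMap.lineMap_apply_module]
    match_scalars <;> field_simp
    ring
  have hTD : (b + c) • T D = b • E + c • F := by
    have h : T D = AffineMap.lineMap E F (c / (b + c)) := by
      rw [hD', ← hB, ← hC]
      exact AffineMap.apply_lineMap T.toAffineMap B C _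
    rw [h, AffineMap.lineMap_apply_module]
    match_scalars <;> field_simp
    ring
  have hE' : E = (c + a)⁻¹ • (c • C + a • A) := by rw [← hE, inv_smul_smul₀ hca]
  have hF' : F = (a + b)⁻¹ • (a • A + b • B) := by rw [← hF, inv_smul_smul₀ hab]
  have hTD' : T D = (b + c)⁻¹ • (b • E + c • F) := by rw [← hTD, inv_smul_smul₀ hbc]
  have hQ' : Q = (2 * (a + b + c))⁻¹ • ((b + c) • A + (c + a) • B + (a + b) • C) := by
    rw [← hQ, inv_smul_smul₀ (mul_ne_zero two_ne_zero hs)]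
  have hcol : Collinear ℝ {A, T D, Q} := by
    rw [collinear_iff_of_mem (p₀ := A) (by simp)]
    refine ⟨(c + a) • (B - A) + (a + b) • (C - A), ?_⟩
    rintro w (rfl | rfl | rfl)
    · exact ⟨0, by simp⟩
    · refine ⟨b * c / ((b + c) * (c + a) * (a + b)), ?_⟩
      rw [hTD', hE', hF', vadd_eq_add]
      match_scalars <;> field_simp <;> ring
    · refine ⟨(2 * (a + b + c))⁻¹, ?_⟩
      rw [hQ', vadd_eq_add]
      match_scalars <;> field_simp <;> ring
  simpa [Set.image_insert_eq] using collinear_image_affineMap hcol T.symm.toAffineMap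

theorem Htilde_perspector_of_anticevian_and_cevian
    (A B C P P' Q Q' D E F D₃ E₃ F₃ : Pt) (x y z : ℝ)
    (hABC : AffineIndependent ℝ ![A, B, C])
    (hsum : x + y + z = 1)
    (hPco : P = x • A + y • B + z • C)
    (hx0 : x ≠ 0) (hy0 : y ≠ 0) (hz0 : z ≠ 0)
    (hx1 : x ≠ 1) (hy1 : y ≠ 1) (hz1 : z ≠ 1)
    (hst : x * y + y * z + z * x ≠ 0)
    (hP' : P' = (y * z / (x * y + y * z + z * x)) • A
        + (x * z / (x * y + y * z + z * x)) • B
        + (x * y / (x * y + y * z + z * x)) • C)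
    (hQ : Q = homoth (cent A B C) (-(1 / 2)) P')
    (hQ' : Q' = homoth (cent A B C) (-(1 / 2)) P)
    (hD : Collinear ℝ {A, P, D} ∧ Collinear ℝ {B, C, D})
    (hE : Collinear ℝ {B, P, E} ∧ Collinear ℝ {A, C, E})
    (hF : Collinear ℝ {C, P, F} ∧ Collinear ℝ {A, B, F})
    (hD₃ : Collinear ℝ {A, P', D₃} ∧ Collinear ℝ {B, C, D₃})
    (hE₃ : Collinear ℝ {B, P', E₃} ∧ Collinear ℝ {A, C, E₃})
    (hF₃ : Collinear ℝ {C, P', F₃} ∧ Collinear ℝ {A, B, F₃})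
    (hxy : x ≠ y) (hyz : y ≠ z) (hxz : x ≠ z)
    (TP' : Pt ≃ᵃ[ℝ] Pt) (hTP' : TP' A = D₃ ∧ TP' B = E₃ ∧ TP' C = F₃) :
    Collinear ℝ {TP'.symm A, D₃, TP'.symm Q} ∧
    Collinear ℝ {TP'.symm B, E₃, TP'.symm Q} ∧
    Collinear ℝ {TP'.symm C, F₃, TP'.symm Q} := by
  obtain ⟨hTA, hTB, hTC⟩ := hTP'
  have hcol : ¬Collinear ℝ {A, B, C} := affineIndependent_iff_not_collinear_set.1 hABC
  have hcol' : ¬Collinear ℝ {B, C, A} := by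
    rwa [show ({B, C, A} : Set Pt) = {A, B, C} by ext; simp; tauto]
  have hcol'' : ¬Collinear ℝ {C, A, B} := by
    rwa [show ({C, A, B} : Set Pt) = {A, B, C} by ext; simp; tauto]
  have hs : y * z + x * z + x * y ≠ 0 := by convert hst using 1; ring
  have hbc : x * z + x * y ≠ 0 := by
    rw [show x * z + x * y = x * (1 - x) by rw [← hsum]; ring]
    exact mul_ne_zero hx0 (sub_ne_zero.2 hx1.symm)
  have hca : x * y + y * z ≠ 0 := by
    rw [show x * y + y * z = y * (1 - y) by rw [← hsum]; ring]
    exact mul_ne_zero hy0 (sub_ne_zero.2 hy1.symm)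
  have hab : y * z + x * z ≠ 0 := by
    rw [show y * z + x * z = z * (1 - z) by rw [← hsum]; ring]
    exact mul_ne_zero hz0 (sub_ne_zero.2 hz1.symm)
  rw [show x * y + y * z + z * x = y * z + x * z + x * y by ring] at hP'
  have hX : (y * z + x * z + x * y) • P' = (y * z) • A + (x * z) • B + (x * y) • C := by
    rw [hP']
    simp only [smul_add, smul_smul, mul_div_cancel₀ _ hs]
  have hQ₂ : (2 * (y * z + x * z + x * y)) • Q
      = (x * z + x * y) • A + (x * y + y * z) • B + (y * z + x * z) • C := by
    have h : (2 * (y * z + x * z + x * y)) • Q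
        = (y * z + x * z + x * y) • (A + B + C) - (y * z + x * z + x * y) • P' := by
      rw [hQ, homoth, cent]
      module
    rw [h, hX]
    module
  have hX' : (x * z + x * y + y * z) • P' = (x * z) • B + (x * y) • C + (y * z) • A := by
    rw [show x * z + x * y + y * z = y * z + x * z + x * y by ring, hX]; abel
  have hX'' : (x * y + y * z + x * z) • P' = (x * y) • C + (y * z) • A + (x * z) • B := by
    rw [show x * y + y * z + x * z = y * z + x * z + x * y by ring, hX]; abel
  have hd := smul_trace_eq_s8 hcol hX hD₃.1 hD₃.2
  have he := smul_trace_eq_s8 hcol' hX' hE₃.1 (by rw [Set.insert_comm]; exact hE₃.2)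
  have hf := smul_trace_eq_s8 hcol'' hX'' hF₃.1 hF₃.2
  refine ⟨collinear_symm_trace_symm hs hbc hca hab hd he hf hQ₂ TP' hTB hTC,
    collinear_symm_trace_symm ?_ hca hab hbc he hf hd ?_ TP' hTC hTA,
    collinear_symm_trace_symm ?_ hab hbc hca hf hd he ?_ TP' hTA hTB⟩
  · convert hs using 1; ring
  · rw [show x * z + x * y + y * z = y * z + x * z + x * y by ring, hQ₂]; abel
  · convert hs using 1; ring
  · rw [show x * y + y * z + x * z = y * z + x * z + x * y by ring, hQ₂]; abel
end
end
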